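/- arXiv:1304.2677 — 4 statements merged into one kernel-verified Lean document; each statement's English description precedes it below -/
import Mathlib

section
/- N_+(Q_h) = Σ_{m=1}^{M₀} 𝒩_+^{(m)} + Σ_{m=M₀+1}^{M₀+M₁} K_m + M₁ and N_-(Q_h) = Σ_{m=1}^{M₀} 𝒩_-^{(m)} + Σ_{m=M₀+1}^{M₀+M₁} K_m + M₁. (These are the total multiplicities of the strictly positive and strictly negative spectrum of the self-adjoint finite rank Hankel operator H on L²(0,∞) given by (Hf)(t) = ∫₀^∞ h(t+s) f(s) ds.) -/
open MeasureTheory Complex Polynomial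

noncomputable section

/-- Lebesgue measure on the half-line `(0,∞)`. -/
abbrev halfLineMeasure : Measure ℝ := volume.restrict (Set.Ioi (0 : ℝ))

/-- `N₊(Q)`: the supremum of `dim V` over (finite-dimensional) subspaces `V` on which the
quadratic form `Q` is strictly positive away from `0`. -/
def Npos {E : Type*} [AddCommGroup E] [Module ℂ E] (Q : E → ℝ) : ℕ :=
  sSup {d : ℕ | ∃ V : Submodule ℂ E, FiniteDimensional ℂ V ∧
    Module.finrank ℂ V = d ∧ ∀ f ∈ V, f ≠ 0 → 0 < Q f}

/-- `N₋(Q)`: the supremum of `dim V` over (finite-dimensional) subspaces `V` on which the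
quadratic form `Q` is strictly negative away from `0`. -/
def Nneg {E : Type*} [AddCommGroup E] [Module ℂ E] (Q : E → ℝ) : ℕ :=
  sSup {d : ℕ | ∃ V : Submodule ℂ E, FiniteDimensional ℂ V ∧
    Module.finrank ℂ V = d ∧ ∀ f ∈ V, f ≠ 0 → Q f < 0}

/-- The Hankel quadratic form `Q_h(f) = ∫₀^∞∫₀^∞ h(t+s) f(s) conj(f(t)) ds dt`
(real-valued since `h` is real-valued). -/
def hankelForm (h : ℝ → ℂ) (f : Lp ℂ 2 halfLineMeasure) : ℝ :=
  (∫ t, (∫ s, h (t + s) * (f : ℝ → ℂ) s * starRingEnd ℂ ((f : ℝ → ℂ) t)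
      ∂halfLineMeasure) ∂halfLineMeasure).re

/-- The finite-rank Hankel kernel `h(t) = Σ_{m=1}^{M} P_m(t) e^{−α_m t}`. -/
def frKernel (M : ℕ) (α : ℕ → ℂ) (P : ℕ → Polynomial ℂ) (t : ℝ) : ℂ :=
  ∑ m ∈ Finset.Icc 1 M, (P m).eval (t : ℂ) * Complex.exp (-α m * t)

/-- `𝒩₊^{(m)}` of a real term with polynomial degree `K` and leading coefficient `p ≠ 0`. -/
def calNpos (K : ℕ) (p : ℝ) : ℕ :=
  if Odd K then (K + 1) / 2 else if 0 < p then K / 2 + 1 else K / 2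

/-- `𝒩₋^{(m)}` of a real term with polynomial degree `K` and leading coefficient `p ≠ 0`. -/
def calNneg (K : ℕ) (p : ℝ) : ℕ :=
  if Odd K then (K + 1) / 2 else if 0 < p then K / 2 else K / 2 + 1


theorem Npos_aux {E ι : Type*} [AddCommGroup E] [Module ℂ E] [Fintype ι] [DecidableEq ι]
    (L : E →ₗ[ℂ] (ι → ℂ)) (hL : Function.Surjective L) (G : Matrix ι ι ℂ) (hG : G.IsHermitian)
    (hG0 : ∀ x, G.mulVec x = 0 → x = 0) (Q : E → ℝ)
    (hQ : ∀ f, Q f = (∑ p, ∑ q, G p q * star (L f p) * L f q).re)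
    (S T : Finset ι) (hST : S.card + T.card = Fintype.card ι)
    (hS : ∀ p ∈ S, ∀ q ∈ S, p ≠ q → G p q = 0) (hS' : ∀ p ∈ S, 0 ≤ (G p p).re)
    (hT : ∀ p ∈ T, ∀ q ∈ T, p ≠ q → G p q = 0) (hT' : ∀ p ∈ T, (G p p).re ≤ 0) :
    sSup {d : ℕ | ∃ V : Submodule ℂ E, FiniteDimensional ℂ V ∧
    Module.finrank ℂ V = d ∧ ∀ f ∈ V, f ≠ 0 → 0 < Q f} = S.card := by
  -- diagonal sums
  have key : ∀ (S : Finset ι), (∀ p ∈ S, ∀ q ∈ S, p ≠ q → G p q = 0) → ∀ x : ι → ℂ,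
      (∀ p, p ∉ S → x p = 0) →
      (∑ p, ∑ q, G p q * star (x p) * x q).re = ∑ p ∈ S, (G p p).re * ‖x p‖ ^ 2 := by
    intro S hS x hx
    have h1 : ∀ p, ∑ q, G p q * star (x p) * x q = if p ∈ S then G p p * star (x p) * x p else 0 := by
      intro p
      split_ifs with hp
      · refine Finset.sum_eq_single_of_mem p (Finset.mem_univ _) ?_
        intro q _ hqp
        by_cases hq : q ∈ S
        · simp [hS p hp q hq (Ne.symm hqp)]
        · simp [hx q hq]
      · simp [hx p hp]
    simp_rw [h1]
    rw [Finset.sum_ite_mem, Finset.univ_inter, Complex.re_sum]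
    refine Finset.sum_congr rfl fun p _ => ?_
    have : star (x p) * x p = ((‖x p‖ ^ 2 : ℝ) : ℂ) := by
      have := Complex.conj_mul' (x p)
      push_cast
      exact this
    rw [mul_assoc, this, Complex.re_mul_ofReal]
  -- spectral
  set U : Matrix ι ι ℂ := (hG.eigenvectorUnitary : Matrix ι ι ℂ) with hU
  have hUU : U * star U = 1 := Unitary.mul_star_self_of_mem hG.eigenvectorUnitary.2
  have hUU' : star U * U = 1 := Unitary.star_mul_self_of_mem hG.eigenvectorUnitary.2
  set ev := hG.eigenvalues with hev
  have hspec : G = U * Matrix.diagonal (fun i => (ev i : ℂ)) * star U := by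
    have := hG.spectral_theorem
    rw [Unitary.conjStarAlgAut_apply] at this
    exact this
  have hform : ∀ y : ι → ℂ, (∑ p, ∑ q, G p q * star ((U.mulVec y) p) * (U.mulVec y) q).re
      = ∑ i, ev i * ‖y i‖ ^ 2 := by
    intro y
    have e1 : ∑ p, ∑ q, G p q * star ((U.mulVec y) p) * (U.mulVec y) q
        = dotProduct (star (U.mulVec y)) (G.mulVec (U.mulVec y)) := by
      simp only [dotProduct, Matrix.mulVec, Finset.mul_sum, Pi.star_apply]
      refine Finset.sum_congr rfl fun p _ => Finset.sum_congr rfl fun q _ => ?_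
      ring
    have e2 : G.mulVec (U.mulVec y) = U.mulVec ((Matrix.diagonal (fun i => (ev i : ℂ))).mulVec y) := by
      rw [hspec, Matrix.mulVec_mulVec, Matrix.mulVec_mulVec, Matrix.mul_assoc, hUU', Matrix.mul_one]
    rw [e1, e2, Matrix.star_mulVec, Matrix.dotProduct_mulVec, Matrix.vecMul_vecMul,
      ← Matrix.star_eq_conjTranspose, hUU', Matrix.vecMul_one]
    simp only [dotProduct, Matrix.mulVec_diagonal, Pi.star_apply, Complex.re_sum]
    refine Finset.sum_congr rfl fun p _ => ?_
    have : star (y p) * y p = ((‖y p‖ ^ 2 : ℝ) : ℂ) := by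
      have := Complex.conj_mul' (y p)
      push_cast
      exact this
    rw [show star (y p) * (↑(ev p) * y p) = ev p * (star (y p) * y p) by ring, this,
      ← Complex.ofReal_mul, Complex.ofReal_re]
  have hev0 : ∀ i, ev i ≠ 0 := by
    intro i hi
    have h0 : G.mulVec (U.mulVec (Pi.single i 1)) = 0 := by
      rw [hspec, Matrix.mulVec_mulVec, Matrix.mul_assoc, hUU', Matrix.mul_one,
        ← Matrix.mulVec_mulVec]
      have : (Matrix.diagonal (fun i => (ev i : ℂ))).mulVec (Pi.single i 1) = 0 := by
        ext j
        rw [Matrix.mulVec_diagonal]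
        by_cases h : j = i
        · subst h; simp [hi]
        · simp [h]
      rw [this, Matrix.mulVec_zero]
    have h1 := hG0 _ h0
    have h2 : (star U).mulVec (U.mulVec (Pi.single i (1:ℂ))) = 0 := by rw [h1, Matrix.mulVec_zero]
    rw [Matrix.mulVec_mulVec, hUU', Matrix.one_mulVec] at h2
    have := congrFun h2 i
    simp at this
  set A : Finset ι := Finset.univ.filter (fun i => 0 < ev i) with hA
  -- upper bound
  have hub : ∀ V : Submodule ℂ E, FiniteDimensional ℂ V → (∀ f ∈ V, f ≠ 0 → 0 < Q f) →
      Module.finrank ℂ V ≤ S.card := by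
    intro V hV hpos
    let R : V →ₗ[ℂ] ({i // i ∉ T} → ℂ) :=
      (LinearMap.funLeft ℂ ℂ (Subtype.val : {i // i ∉ T} → ι)) ∘ₗ L ∘ₗ V.subtype
    have hR : Function.Injective R := by
      rw [← LinearMap.ker_eq_bot, LinearMap.ker_eq_bot']
      rintro ⟨f, hf⟩ h
      by_contra hne
      have hlt := hpos f hf (fun h => hne (by simp [h]))
      rw [hQ, key T hT (L f)] at hlt
      · have : ∑ p ∈ T, (G p p).re * ‖L f p‖ ^ 2 ≤ 0 :=
          Finset.sum_nonpos fun p hp => mul_nonpos_of_nonpos_of_nonneg (hT' p hp) (by positivity)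
        linarith
      · intro p hp
        exact congrFun h ⟨p, hp⟩
    have := LinearMap.finrank_le_finrank_of_injective hR
    rw [Module.finrank_fintype_fun_eq_card, Fintype.card_subtype_compl, Fintype.card_coe] at this
    omega
  -- lower bound 1
  have hlb : S.card ≤ A.card := by
    let X : (S → ℂ) →ₗ[ℂ] (ι → ℂ) := Function.ExtendByZero.linearMap ℂ (Subtype.val : S → ι)
    let R : (S → ℂ) →ₗ[ℂ] (A → ℂ) :=
      (LinearMap.funLeft ℂ ℂ (Subtype.val : A → ι)) ∘ₗ (star U).mulVecLin ∘ₗ X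
    have hX : ∀ x p, X x p = if h : p ∈ S then x ⟨p, h⟩ else 0 := by
      intro x p
      simp only [X, Function.ExtendByZero.linearMap_apply]
      split_ifs with h
      · exact Subtype.val_injective.extend_apply x 0 ⟨p, h⟩
      · rw [Function.extend_apply']
        · rfl
        · rintro ⟨a, rfl⟩; exact h a.2
    have hR : Function.Injective R := by
      rw [← LinearMap.ker_eq_bot, LinearMap.ker_eq_bot']
      intro x h
      set y := (star U).mulVec (X x) with hy
      have hyx : U.mulVec y = X x := by
        rw [hy, Matrix.mulVec_mulVec, hUU, Matrix.one_mulVec]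
      have hyA : ∀ i ∈ A, y i = 0 := fun i hi => congrFun h ⟨i, hi⟩
      have h1 := hform y
      rw [hyx, key S hS _ (fun p hp => by rw [hX]; simp [hp])] at h1
      have h2 : 0 ≤ ∑ p ∈ S, (G p p).re * ‖X x p‖ ^ 2 :=
        Finset.sum_nonneg fun p hp => mul_nonneg (hS' p hp) (by positivity)
      have h3 : ∀ i ∈ Finset.univ, ev i * ‖y i‖ ^ 2 ≤ 0 := by
        intro i _
        by_cases hi : i ∈ A
        · simp [hyA i hi]
        · have : ev i ≤ 0 := by simpa [hA] using hi
          exact mul_nonpos_of_nonpos_of_nonneg this (by positivity)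
      have h4 : ∑ i, ev i * ‖y i‖ ^ 2 = 0 := le_antisymm (Finset.sum_nonpos h3) (h1 ▸ h2)
      have h5 := (Finset.sum_eq_zero_iff_of_nonpos h3).1 h4
      have h6 : y = 0 := by
        ext i
        have := h5 i (Finset.mem_univ _)
        simpa [hev0 i] using this
      rw [h6, Matrix.mulVec_zero] at hyx
      ext p
      have := hX x p
      rw [← hyx] at this
      simpa using this.symm
    have := LinearMap.finrank_le_finrank_of_injective hR
    simpa using this
  -- lower bound 2
  obtain ⟨V, hV, hVd, hVpos⟩ : ∃ V : Submodule ℂ E, FiniteDimensional ℂ V ∧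
      Module.finrank ℂ V = A.card ∧ ∀ f ∈ V, f ≠ 0 → 0 < Q f := by
    obtain ⟨g, hg⟩ := L.exists_rightInverse_of_surjective (LinearMap.range_eq_top.2 hL)
    let X : (A → ℂ) →ₗ[ℂ] (ι → ℂ) := Function.ExtendByZero.linearMap ℂ (Subtype.val : A → ι)
    have hX : ∀ x p, X x p = if h : p ∈ A then x ⟨p, h⟩ else 0 := by
      intro x p
      simp only [X, Function.ExtendByZero.linearMap_apply]
      split_ifs with h
      · exact Subtype.val_injective.extend_apply x 0 ⟨p, h⟩
      · rw [Function.extend_apply']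
        · rfl
        · rintro ⟨a, rfl⟩; exact h a.2
    let R : (A → ℂ) →ₗ[ℂ] E := g ∘ₗ U.mulVecLin ∘ₗ X
    have hLR : ∀ x, L (R x) = U.mulVec (X x) := by
      intro x
      exact LinearMap.congr_fun hg _
    have hQR : ∀ x, x ≠ 0 → 0 < Q (R x) := by
      intro x hx
      rw [hQ, hLR, hform]
      have hnn : ∀ i ∈ Finset.univ, 0 ≤ ev i * ‖X x i‖ ^ 2 := by
        intro i _
        rw [hX]
        split_ifs with h
        · have : 0 < ev i := by simpa [hA] using h
          positivity
        · simp
      obtain ⟨a, ha⟩ := Function.ne_iff.1 hx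
      refine Finset.sum_pos' hnn ⟨a, Finset.mem_univ _, ?_⟩
      have : 0 < ev a := (Finset.mem_filter.1 a.2).2
      rw [hX]
      simp only [a.2, dif_pos]
      have : x a ≠ 0 := ha
      positivity
    have hR : Function.Injective R := by
      rw [← LinearMap.ker_eq_bot, LinearMap.ker_eq_bot']
      intro x h
      by_contra hne
      have := hQR x hne
      rw [h, hQ] at this
      simp at this
    refine ⟨LinearMap.range R, inferInstance, ?_, ?_⟩
    · rw [LinearMap.finrank_range_of_inj hR]; simp
    · rintro _ ⟨x, rfl⟩ hne
      exact hQR x (fun h => hne (by simp [h]))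
  have hle := hub V hV hVpos
  apply IsGreatest.csSup_eq
  refine ⟨⟨V, hV, by omega, hVpos⟩, ?_⟩
  rintro d ⟨W, hW, rfl, hWp⟩
  exact hub W hW hWp

theorem expPoly_indep (s : Finset ℕ) : ∀ (β : ℕ → ℂ), (∀ m ∈ s, ∀ n ∈ s, m ≠ n → β m ≠ β n) →
    ∀ R : ℕ → ℂ[X], (∀ t : ℝ, 0 < t → ∑ m ∈ s, (R m).eval (t : ℂ) * cexp (β m * t) = 0) →
    ∀ m ∈ s, R m = 0 := by
  induction s using Finset.induction_on with
  | empty => simp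
  | insert n s hn ih =>
    -- normalized claim
    have main : ∀ d : ℕ, ∀ γ : ℕ → ℂ, (∀ m ∈ s, ∀ n ∈ s, m ≠ n → γ m ≠ γ n) →
        (∀ m ∈ s, γ m ≠ 0) → ∀ R : ℕ → ℂ[X], ∀ R₀ : ℂ[X], R₀.degree < d →
        (∀ t : ℝ, 0 < t → R₀.eval (t : ℂ) + ∑ m ∈ s, (R m).eval (t : ℂ) * cexp (γ m * t) = 0) →
        R₀ = 0 ∧ ∀ m ∈ s, R m = 0 := by
      intro d
      induction d with
      | zero =>
        intro γ hγ hγ0 R R₀ hR₀ h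
        have h0 : R₀ = 0 := by
          simpa [Polynomial.degree_eq_bot] using hR₀
        refine ⟨h0, ih γ hγ R ?_⟩
        intro t ht
        simpa [h0] using h t ht
      | succ d ihd =>
        intro γ hγ hγ0 R R₀ hR₀ h
        have hder := ihd γ hγ hγ0 (fun m => derivative (R m) + C (γ m) * R m) (derivative R₀) ?_ ?_
        · have hR : ∀ m ∈ s, R m = 0 := by
            intro m hm
            by_contra hne
            have h1 := hder.2 m hm
            have h2 : (derivative (R m)).degree < (C (γ m) * R m).degree := by
              rw [degree_C_mul (hγ0 m hm)]
              exact degree_derivative_lt hne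
            have h3 := degree_add_eq_right_of_degree_lt h2
            have h1' : derivative (R m) + C (γ m) * R m = 0 := h1
            rw [h1', degree_C_mul (hγ0 m hm), degree_zero] at h3
            exact hne (degree_eq_bot.1 h3.symm)
          refine ⟨?_, hR⟩
          have hz : ∀ t : ℝ, 0 < t → R₀.eval (t : ℂ) = 0 := by
            intro t ht
            have := h t ht
            rwa [Finset.sum_eq_zero (fun m hm => by rw [hR m hm]; simp), add_zero] at this
          refine Polynomial.eq_zero_of_infinite_isRoot _ ?_
          refine Set.Infinite.mono (s := (fun t : ℝ => (t : ℂ)) '' Set.Ioi 0) ?_ ?_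
          · rintro _ ⟨t, ht, rfl⟩
            exact hz t ht
          · exact (Set.Ioi_infinite 0).image (Complex.ofReal_injective.injOn)
        · by_cases h0 : R₀ = 0
          · simp [h0]
          · have h1 := degree_derivative_lt h0
            have h2 : (derivative R₀).degree < R₀.degree := h1
            rw [degree_eq_natDegree h0] at h2 hR₀
            refine lt_of_lt_of_le h2 ?_
            norm_cast at hR₀ ⊢
            omega
        · intro t ht
          have hd : HasDerivAt (fun t : ℝ => R₀.eval (t : ℂ) +
              ∑ m ∈ s, (R m).eval (t : ℂ) * cexp (γ m * t))
              ((derivative R₀).eval (t : ℂ) + ∑ m ∈ s, ((derivative (R m)).eval (t : ℂ) *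
                cexp (γ m * t) + (R m).eval (t : ℂ) * (cexp (γ m * t) * (γ m * 1)))) t := by
            refine HasDerivAt.add ((R₀.hasDerivAt (t : ℂ)).comp_ofReal) ?_
            refine HasDerivAt.fun_sum fun m _ => ?_
            refine HasDerivAt.mul (((R m).hasDerivAt (t : ℂ)).comp_ofReal) ?_
            exact (((hasDerivAt_id (t : ℂ)).const_mul (γ m)).cexp).comp_ofReal
          have hd0 : HasDerivAt (fun t : ℝ => R₀.eval (t : ℂ) +
              ∑ m ∈ s, (R m).eval (t : ℂ) * cexp (γ m * t)) 0 t := by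
            refine (hasDerivAt_const t (0 : ℂ)).congr_of_eventuallyEq ?_
            filter_upwards [Ioi_mem_nhds ht] with u hu
            exact h u hu
          rw [← hd.unique hd0]
          congr 1
          refine Finset.sum_congr rfl fun m _ => ?_
          simp only [eval_add, eval_mul, eval_C]
          ring
    intro β hβ R h
    have := main ((R n).natDegree + 1) (fun m => β m - β n) ?_ ?_ R (R n) ?_ ?_
    · intro m hm
      rcases Finset.mem_insert.1 hm with rfl | hm
      · exact this.1
      · exact this.2 m hm
    · intro m hm k hk hmk he
      exact hβ m (Finset.mem_insert_of_mem hm) k (Finset.mem_insert_of_mem hk) hmk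
        (sub_left_inj.1 he)
    · intro m hm he
      exact hβ m (Finset.mem_insert_of_mem hm) n (Finset.mem_insert_self _ _)
        (by rintro rfl; exact hn hm) (sub_eq_zero.1 he)
    · refine lt_of_le_of_lt degree_le_natDegree ?_
      exact_mod_cast Nat.lt_succ_self _
    · intro t ht
      have h1 := h t ht
      rw [Finset.sum_insert hn] at h1
      have h2 : (R n).eval (t : ℂ) + ∑ m ∈ s, (R m).eval (t : ℂ) * cexp ((β m - β n) * t)
          = ((R n).eval (t : ℂ) * cexp (β n * t) +
            ∑ m ∈ s, (R m).eval (t : ℂ) * cexp (β m * t)) * cexp (-(β n * t)) := by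
        rw [add_mul, Finset.sum_mul, mul_assoc, ← Complex.exp_add]
        simp only [mul_assoc, ← Complex.exp_add, add_neg_cancel, Complex.exp_zero, mul_one]
        congr 1
        refine Finset.sum_congr rfl fun m _ => ?_
        congr 2
        ring
      rw [h2, h1, zero_mul]

theorem eval_add_expand (P : ℂ[X]) (K : ℕ) (hK : P.natDegree ≤ K) (t s : ℂ) :
    P.eval (t + s) = ∑ j ∈ Finset.range (K + 1), ∑ i ∈ Finset.range (K + 1),
      ((i + j).choose j * P.coeff (i + j)) * t ^ i * s ^ j := by
  rw [add_comm, ← taylor_eval, eval_eq_sum_range' (n := K + 1) (by rw [natDegree_taylor]; omega)]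
  refine Finset.sum_congr rfl fun j _ => ?_
  rw [taylor_coeff, eval_eq_sum_range' (n := K + 1), Finset.sum_mul]
  · simp only [hasseDeriv_coeff]
  · have := natDegree_hasseDeriv_le P j
    omega

theorem memLp_basic (a : ℂ) (ha : 0 < a.re) (j : ℕ) :
    MemLp (fun t : ℝ => (t : ℂ) ^ j * cexp (-a * t)) 2 (volume.restrict (Set.Ioi (0 : ℝ))) := by
  rw [memLp_two_iff_integrable_sq_norm (by fun_prop)]
  have := integrableOn_rpow_mul_exp_neg_mul_rpow (p := 1) (s := 2 * j) (b := 2 * a.re)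
    (by have : (0:ℝ) ≤ j := by positivity
        linarith) (by norm_num) (by linarith)
  refine (this.congr_fun ?_ measurableSet_Ioi)
  intro t ht
  have ht : 0 < t := ht
  simp only [norm_mul, norm_pow, Complex.norm_exp, Complex.norm_real, Real.rpow_one]
  rw [Real.norm_of_nonneg ht.le, mul_pow, ← pow_mul, ← Real.exp_nat_mul]
  congr 1
  · rw [mul_comm j 2, ← Real.rpow_natCast]; push_cast; rfl
  · congr 1; simp; ring

open scoped ComplexOrder in
theorem surj_of_li {E ι : Type*} [NormedAddCommGroup E] [InnerProductSpace ℂ E] [Fintype ι]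
    [DecidableEq ι] (v : ι → E) (hv : LinearIndependent ℂ v) :
    Function.Surjective (LinearMap.pi (fun p => ((innerSL ℂ (v p)) : E →ₗ[ℂ] ℂ))) := by
  intro y
  have hG := (Matrix.posDef_gram_of_linearIndependent hv).isUnit
  have hdet := (Matrix.isUnit_iff_isUnit_det _).1 hG
  set G := Matrix.gram ℂ v
  refine ⟨∑ q, (G⁻¹.mulVec y) q • v q, ?_⟩
  ext p
  have h : G.mulVec (G⁻¹.mulVec y) = y := by
    rw [Matrix.mulVec_mulVec, Matrix.mul_nonsing_inv _ hdet, Matrix.one_mulVec]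
  have h2 := congrFun h p
  rw [← h2]
  simp only [LinearMap.pi_apply, ContinuousLinearMap.coe_coe, innerSL_apply_apply, inner_sum,
    inner_smul_right]
  rw [Matrix.mulVec, dotProduct]
  refine Finset.sum_congr rfl fun q _ => ?_
  rw [mul_comm]
  rfl

abbrev idx (J : Finset ℕ) (K : ℕ → ℕ) : Finset (Σ _ : ℕ, ℕ) :=
  J.sigma (fun m => Finset.range (K m + 1))

theorem idx_sum {β : Type*} [AddCommMonoid β] (J : Finset ℕ) (K : ℕ → ℕ) (F : (Σ _ : ℕ, ℕ) → β) :
    ∑ p : idx J K, F p.1 = ∑ m ∈ J, ∑ j ∈ Finset.range (K m + 1), F ⟨m, j⟩ := by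
  rw [Finset.sum_coe_sort (idx J K) F, Finset.sum_sigma]

def bv (α : ℕ → ℂ) (J : Finset ℕ) (K : ℕ → ℕ) (hre : ∀ m ∈ J, 0 < (α m).re) (p : idx J K) :
    Lp ℂ 2 halfLineMeasure :=
  (memLp_basic (starRingEnd ℂ (α p.1.1))
    (by rw [Complex.conj_re]; exact hre _ (Finset.mem_sigma.1 p.2).1) p.1.2).toLp _

theorem bv_coe (α : ℕ → ℂ) (J : Finset ℕ) (K : ℕ → ℕ) (hre : ∀ m ∈ J, 0 < (α m).re)
    (p : idx J K) : (bv α J K hre p : ℝ → ℂ) =ᵐ[halfLineMeasure]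
      fun t : ℝ => (t : ℂ) ^ p.1.2 * cexp (-(starRingEnd ℂ (α p.1.1)) * t) :=
  MemLp.coeFn_toLp _

theorem bv_li (α : ℕ → ℂ) (J : Finset ℕ) (K : ℕ → ℕ) (hre : ∀ m ∈ J, 0 < (α m).re)
    (hdist : ∀ m ∈ J, ∀ n ∈ J, m ≠ n → α m ≠ α n) :
    LinearIndependent ℂ (bv α J K hre) := by
  rw [Fintype.linearIndependent_iff]
  intro c hc
  have h1 : (fun t : ℝ => ∑ p : idx J K, c p * ((t : ℂ) ^ p.1.2 *
      cexp (-(starRingEnd ℂ (α p.1.1)) * t))) =ᵐ[halfLineMeasure] fun _ => 0 := by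
    have e1 := Lp.coeFn_zero ℂ 2 halfLineMeasure
    rw [← hc] at e1
    have e2 : ((∑ p, c p • bv α J K hre p : Lp ℂ 2 halfLineMeasure) : ℝ → ℂ) =ᵐ[halfLineMeasure]
        ∑ p, (fun t => c p * (bv α J K hre p : ℝ → ℂ) t) := by
      have : ∀ s : Finset (idx J K), ((∑ p ∈ s, c p • bv α J K hre p : Lp ℂ 2 halfLineMeasure) :
          ℝ → ℂ) =ᵐ[halfLineMeasure] ∑ p ∈ s, (fun t => c p * (bv α J K hre p : ℝ → ℂ) t) := by
        intro s
        induction s using Finset.induction_on with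
        | empty => simpa using Lp.coeFn_zero ℂ 2 halfLineMeasure
        | insert a s ha ih =>
          rw [Finset.sum_insert ha, Finset.sum_insert ha]
          filter_upwards [Lp.coeFn_add (c a • bv α J K hre a) (∑ p ∈ s, c p • bv α J K hre p), ih,
            Lp.coeFn_smul (c a) (bv α J K hre a)] with t h1 h2 h3
          rw [h1, Pi.add_apply, h2, h3]
          rfl
      exact this _
    have e3 := ae_all_iff.2 (fun p => bv_coe α J K hre p)
    filter_upwards [e1, e2, e3] with t h1 h2 h3
    rw [h2, Finset.sum_apply] at h1
    simp only [h3] at h1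
    simpa using h1
  have h2 := Measure.eqOn_open_of_ae_eq h1 isOpen_Ioi (by fun_prop) (by fun_prop)
  let c' : (Σ _ : ℕ, ℕ) → ℂ := fun p => if h : p ∈ idx J K then c ⟨p, h⟩ else 0
  have hc' : ∀ p : idx J K, c p = c' p.1 := by
    intro p
    simp only [c']
    rw [dif_pos p.2]
  let R : ℕ → ℂ[X] := fun m => ∑ j ∈ Finset.range (K m + 1), Polynomial.C (c' ⟨m, j⟩) * X ^ j
  have hR := expPoly_indep J (fun m => -(starRingEnd ℂ (α m))) ?_ R ?_
  · intro p
    have hp := Finset.mem_sigma.1 p.2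
    have h3 := congrArg (fun r => r.coeff p.1.2) (hR p.1.1 hp.1)
    simp only [R, finsetSum_coeff, coeff_C_mul, coeff_X_pow, coeff_zero] at h3
    rw [Finset.sum_eq_single p.1.2] at h3
    · rw [hc']; simpa using h3
    · intro b _ hb; simp [hb.symm]
    · intro h; exact absurd hp.2 h
  · intro m hm n hn hmn he
    exact hdist m hm n hn hmn ((starRingEnd ℂ).injective (neg_injective he))
  · intro t ht
    have h3 := h2 ht
    simp only [hc'] at h3
    rw [idx_sum J K (fun p => c' p * ((t : ℂ) ^ p.2 * cexp (-(starRingEnd ℂ (α p.1)) * t)))] at h3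
    rw [← h3]
    refine Finset.sum_congr rfl fun m _ => ?_
    simp only [R, eval_finsetSum, Finset.sum_mul, eval_mul, eval_C, eval_pow, eval_X, mul_assoc]

def gm (σ : ℕ → ℕ) (P : ℕ → ℂ[X]) (p q : Σ _ : ℕ, ℕ) : ℂ :=
  if p.1 = σ q.1 then ((p.2 + q.2).choose q.2 : ℂ) * (P q.1).coeff (p.2 + q.2) else 0

theorem kernel_expand (J : Finset ℕ) (α : ℕ → ℂ) (P : ℕ → ℂ[X]) (K : ℕ → ℕ) (σ : ℕ → ℕ)
    (hσ : ∀ m ∈ J, σ m ∈ J) (hα : ∀ m ∈ J, α (σ m) = starRingEnd ℂ (α m))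
    (hK : ∀ m ∈ J, K (σ m) = K m) (hP : ∀ m ∈ J, (P m).natDegree = K m) (t s : ℝ) :
    ∑ m ∈ J, (P m).eval ((t + s : ℝ) : ℂ) * cexp (-α m * (t + s : ℝ)) =
    ∑ p : idx J K, ∑ q : idx J K, gm σ P p.1 q.1 *
      starRingEnd ℂ ((t : ℂ) ^ p.1.2 * cexp (-α p.1.1 * t)) *
      ((s : ℂ) ^ q.1.2 * cexp (-α q.1.1 * s)) := by
  rw [Finset.sum_comm]
  rw [idx_sum J K (fun q => ∑ p : idx J K, gm σ P p.1 q *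
      starRingEnd ℂ ((t : ℂ) ^ p.1.2 * cexp (-α p.1.1 * t)) *
      ((s : ℂ) ^ q.2 * cexp (-α q.1 * s)))]
  refine Finset.sum_congr rfl fun m hm => ?_
  push_cast
  rw [eval_add_expand (P m) (K m) (hP m hm).le, Finset.sum_mul]
  refine Finset.sum_congr rfl fun j _ => ?_
  rw [idx_sum J K (fun p => gm σ P p ⟨m, j⟩ *
      starRingEnd ℂ ((t : ℂ) ^ p.2 * cexp (-α p.1 * t)) *
      ((s : ℂ) ^ j * cexp (-α m * s))), Finset.sum_eq_single (s := J) (σ m), hK m hm, Finset.sum_mul]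
  · refine Finset.sum_congr rfl fun i _ => ?_
    simp only [gm, if_true, map_mul, map_pow, Complex.conj_ofReal, ← Complex.exp_conj, map_neg,
      hα m hm, Complex.conj_conj]
    rw [mul_add, Complex.exp_add]
    ring
  · intro b _ hb
    simp [gm, hb]
  · intro h
    exact absurd (hσ m hm) h

theorem integral_bv (α : ℕ → ℂ) (J : Finset ℕ) (K : ℕ → ℕ) (hre : ∀ m ∈ J, 0 < (α m).re)
    (p : idx J K) (f : Lp ℂ 2 halfLineMeasure) :
    Integrable (fun s : ℝ => ((s : ℂ) ^ p.1.2 * cexp (-α p.1.1 * s)) * (f : ℝ → ℂ) s)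
      halfLineMeasure ∧
    ∫ s : ℝ, ((s : ℂ) ^ p.1.2 * cexp (-α p.1.1 * s)) * (f : ℝ → ℂ) s ∂halfLineMeasure
      = inner ℂ (bv α J K hre p) f := by
  have h : (fun s : ℝ => inner ℂ ((bv α J K hre p : ℝ → ℂ) s) ((f : ℝ → ℂ) s))
      =ᵐ[halfLineMeasure]
      (fun s : ℝ => ((s : ℂ) ^ p.1.2 * cexp (-α p.1.1 * s)) * (f : ℝ → ℂ) s) := by
    filter_upwards [bv_coe α J K hre p] with s hs
    rw [hs, RCLike.inner_apply, mul_comm]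
    simp only [map_mul, map_pow, Complex.conj_ofReal, ← Complex.exp_conj, map_neg,
      Complex.conj_conj]
  constructor
  · exact (L2.integrable_inner (𝕜 := ℂ) (bv α J K hre p) f).congr h
  · rw [L2.inner_def]
    exact (integral_congr_ae h).symm

theorem hankel_eq (J : Finset ℕ) (α : ℕ → ℂ) (P : ℕ → ℂ[X]) (K : ℕ → ℕ) (σ : ℕ → ℕ)
    (hσ : ∀ m ∈ J, σ m ∈ J) (hα : ∀ m ∈ J, α (σ m) = starRingEnd ℂ (α m))
    (hK : ∀ m ∈ J, K (σ m) = K m) (hP : ∀ m ∈ J, (P m).natDegree = K m)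
    (hre : ∀ m ∈ J, 0 < (α m).re) (f : Lp ℂ 2 halfLineMeasure) :
    hankelForm (fun t => ∑ m ∈ J, (P m).eval (t : ℂ) * cexp (-α m * t)) f =
      (∑ p : idx J K, ∑ q : idx J K, gm σ P p.1 q.1 * star (inner ℂ (bv α J K hre p) f) *
        inner ℂ (bv α J K hre q) f).re := by
  unfold hankelForm
  congr 1
  have h1 : ∀ t : ℝ, ∫ s, (∑ m ∈ J, (P m).eval ((t + s : ℝ) : ℂ) * cexp (-α m * (t + s : ℝ))) *
      (f : ℝ → ℂ) s * starRingEnd ℂ ((f : ℝ → ℂ) t) ∂halfLineMeasure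
      = ∑ p : idx J K, ∑ q : idx J K, gm σ P p.1 q.1 * inner ℂ (bv α J K hre q) f *
        starRingEnd ℂ (((t : ℂ) ^ p.1.2 * cexp (-α p.1.1 * t)) * (f : ℝ → ℂ) t) := by
    intro t
    have e : ∀ s : ℝ, (∑ m ∈ J, (P m).eval ((t + s : ℝ) : ℂ) * cexp (-α m * (t + s : ℝ))) *
      (f : ℝ → ℂ) s * starRingEnd ℂ ((f : ℝ → ℂ) t) = ∑ p : idx J K, ∑ q : idx J K,
        (gm σ P p.1 q.1 *
        starRingEnd ℂ (((t : ℂ) ^ p.1.2 * cexp (-α p.1.1 * t)) * (f : ℝ → ℂ) t)) *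
        (((s : ℂ) ^ q.1.2 * cexp (-α q.1.1 * s)) * (f : ℝ → ℂ) s) := by
      intro s
      rw [kernel_expand J α P K σ hσ hα hK hP, Finset.sum_mul, Finset.sum_mul]
      refine Finset.sum_congr rfl fun p _ => ?_
      rw [Finset.sum_mul, Finset.sum_mul]
      refine Finset.sum_congr rfl fun q _ => ?_
      rw [map_mul _ _ ((f : ℝ → ℂ) t)]
      ring
    simp_rw [e]
    rw [integral_finsetSum]
    · refine Finset.sum_congr rfl fun p _ => ?_
      rw [integral_finsetSum]
      · refine Finset.sum_congr rfl fun q _ => ?_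
        rw [integral_const_mul, (integral_bv α J K hre q f).2]
        ring
      · intro q _
        exact (integral_bv α J K hre q f).1.const_mul _
    · intro p _
      refine integrable_finsetSum _ fun q _ => ?_
      exact (integral_bv α J K hre q f).1.const_mul _
  simp_rw [h1]
  have hint : ∀ p : idx J K, Integrable (fun t : ℝ => starRingEnd ℂ
      (((t : ℂ) ^ p.1.2 * cexp (-α p.1.1 * t)) * (f : ℝ → ℂ) t)) halfLineMeasure := fun p =>
    (Complex.conjCLE : ℂ →L[ℝ] ℂ).integrable_comp (integral_bv α J K hre p f).1
  rw [integral_finsetSum]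
  · refine Finset.sum_congr rfl fun p _ => ?_
    rw [integral_finsetSum]
    · refine Finset.sum_congr rfl fun q _ => ?_
      rw [integral_const_mul, integral_conj, (integral_bv α J K hre p f).2]
      rw [starRingEnd_apply]
      ring
    · intro q _
      exact (hint p).const_mul _
  · intro p _
    exact integrable_finsetSum _ fun q _ => (hint p).const_mul _

theorem calN_S (K : ℕ) (r : ℝ) (i j : ℕ) (hi : K + 1 ≤ i + calNpos K r)
    (hj : K + 1 ≤ j + calNpos K r) : K < i + j ∨ (i + j = K ∧ i = j ∧ 0 < r) ∨
      (K < i + j) := by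
  unfold calNpos at hi hj
  split_ifs at hi hj with h1 h2
  · omega
  · rw [Nat.not_odd_iff_even] at h1
    obtain ⟨k, hk⟩ := h1
    by_cases h : K < i + j
    · exact Or.inl h
    · exact Or.inr (Or.inl ⟨by omega, by omega, h2⟩)
  · omega

theorem calN_T (K : ℕ) (r : ℝ) (i j : ℕ) (hi : calNpos K r ≤ i)
    (hj : calNpos K r ≤ j) : K < i + j ∨ (i + j = K ∧ i = j ∧ r ≤ 0) := by
  unfold calNpos at hi hj
  split_ifs at hi hj with h1 h2
  · obtain ⟨k, hk⟩ := h1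
    omega
  · omega
  · rw [Nat.not_odd_iff_even] at h1
    obtain ⟨k, hk⟩ := h1
    by_cases h : K < i + j
    · exact Or.inl h
    · exact Or.inr ⟨by omega, by omega, not_lt.1 h2⟩

theorem calN_le (K : ℕ) (r : ℝ) : calNpos K r ≤ K + 1 := by
  unfold calNpos
  split_ifs <;> omega

theorem card_idx (J : Finset ℕ) (K : ℕ → ℕ) (pr : (Σ _ : ℕ, ℕ) → Prop) [DecidablePred pr]
    (c : ℕ → ℕ) (h : ∀ m ∈ J, ((Finset.range (K m + 1)).filter (fun j => pr ⟨m, j⟩)).card = c m) :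
    ((Finset.univ : Finset (idx J K)).filter (fun p => pr p.1)).card = ∑ m ∈ J, c m := by
  rw [Finset.card_filter, idx_sum J K (fun p => if pr p then 1 else 0)]
  refine Finset.sum_congr rfl fun m hm => ?_
  rw [← h m hm, Finset.card_filter]

theorem core (J : Finset ℕ) (α : ℕ → ℂ) (P : ℕ → ℂ[X]) (K : ℕ → ℕ) (σ : ℕ → ℕ) (c : ℕ → ℕ)
    (hdist : ∀ m ∈ J, ∀ n ∈ J, m ≠ n → α m ≠ α n)
    (hσ : ∀ m ∈ J, σ m ∈ J) (hσσ : ∀ m ∈ J, σ (σ m) = m)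
    (hα : ∀ m ∈ J, α (σ m) = starRingEnd ℂ (α m))
    (hK : ∀ m ∈ J, K (σ m) = K m) (hP : ∀ m ∈ J, (P m).natDegree = K m)
    (hP0 : ∀ m ∈ J, P m ≠ 0)
    (hPc : ∀ m ∈ J, ∀ k, (P (σ m)).coeff k = starRingEnd ℂ ((P m).coeff k))
    (hre : ∀ m ∈ J, 0 < (α m).re)
    (hc : ∀ m ∈ J, c m ≤ K m + 1)
    (hc1 : ∀ m ∈ J, σ m = m → c m = calNpos (K m) (P m).leadingCoeff.re)
    (hc2 : ∀ m ∈ J, σ m ≠ m → c m + c (σ m) = K m + 1 ∧ (c m = 0 ∨ c (σ m) = 0)) :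
    Npos (hankelForm (fun t => ∑ m ∈ J, (P m).eval (t : ℂ) * cexp (-α m * t))) =
      ∑ m ∈ J, c m := by
  have hcS : ((Finset.univ : Finset (idx J K)).filter
      (fun p => K p.1.1 + 1 ≤ p.1.2 + c p.1.1)).card = ∑ m ∈ J, c m := by
    refine card_idx J K (fun p => K p.1 + 1 ≤ p.2 + c p.1) c ?_
    intro m hm
    have := hc m hm
    have e : (Finset.range (K m + 1)).filter (fun j => K m + 1 ≤ j + c m)
        = Finset.Ico (K m + 1 - c m) (K m + 1) := by
      ext j; simp only [Finset.mem_filter, Finset.mem_range, Finset.mem_Ico]; omega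
    simp only [e, Nat.card_Ico]; omega
  have hcT : ((Finset.univ : Finset (idx J K)).filter
      (fun p => c p.1.1 ≤ p.1.2)).card = ∑ m ∈ J, (K m + 1 - c m) := by
    refine card_idx J K (fun p => c p.1 ≤ p.2) (fun m => K m + 1 - c m) ?_
    intro m hm
    have := hc m hm
    have e : (Finset.range (K m + 1)).filter (fun j => c m ≤ j)
        = Finset.Ico (c m) (K m + 1) := by
      ext j; simp only [Finset.mem_filter, Finset.mem_range, Finset.mem_Ico]; omega
    simp only [e, Nat.card_Ico]
  have hcard : Fintype.card (idx J K) = ∑ m ∈ J, (K m + 1) := by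
    rw [Fintype.card_coe, Finset.card_sigma]; simp
  have mem1 : ∀ p : idx J K, p.1.1 ∈ J := fun p => (Finset.mem_sigma.1 p.2).1
  have mem2 : ∀ p : idx J K, p.1.2 ≤ K p.1.1 := fun p => by
    have := (Finset.mem_sigma.1 p.2).2
    rw [Finset.mem_range] at this; omega
  have hcoef0 : ∀ m ∈ J, ∀ k, K m < k → (P m).coeff k = 0 := fun m hm k hk =>
    coeff_eq_zero_of_natDegree_lt (by rw [hP m hm]; exact hk)
  have hlead : ∀ m ∈ J, (P m).leadingCoeff = (P m).coeff (K m) := fun m hm => by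
    rw [← hP m hm]; rfl
  rw [← hcS]
  unfold Npos
  refine Npos_aux (LinearMap.pi (fun p => ((innerSL ℂ (bv α J K hre p)) :
    Lp ℂ 2 halfLineMeasure →ₗ[ℂ] ℂ))) (surj_of_li _ (bv_li α J K hre hdist))
    (Matrix.of fun p q : idx J K => gm σ P p.1 q.1) ?_ ?_ _ ?_ _
    ((Finset.univ : Finset (idx J K)).filter (fun p => c p.1.1 ≤ p.1.2)) ?_ ?_ ?_ ?_ ?_
  · -- Hermitian
    ext p q
    simp only [Matrix.conjTranspose_apply, Matrix.of_apply, gm]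
    by_cases h : p.1.1 = σ q.1.1
    · have h' : q.1.1 = σ p.1.1 := by rw [h, hσσ _ (mem1 q)]
      rw [if_pos h, if_pos h', h, star_mul', ← starRingEnd_apply ((P _).coeff _),
        hPc _ (mem1 q), Complex.conj_conj, add_comm q.1.2 p.1.2, Nat.choose_symm_add]
      simp
    · have h' : ¬ q.1.1 = σ p.1.1 := fun h' => h (by rw [h', hσσ _ (mem1 p)])
      rw [if_neg h, if_neg h']; simp
  · -- nondegenerate
    intro x hx
    have : ∀ j, ∀ q : idx J K, q.1.2 = j → x q = 0 := by
      intro j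
      induction j using Nat.strong_induction_on with
      | _ j ih =>
      rintro q hq
      have hq1 := mem1 q
      have hq2 := mem2 q
      let p : idx J K := ⟨⟨σ q.1.1, K q.1.1 - q.1.2⟩, Finset.mem_sigma.2
        ⟨hσ _ hq1, Finset.mem_range.2 (by simp only [hK _ hq1]; omega)⟩⟩
      have h1 := congrFun hx p
      simp only [Matrix.mulVec, dotProduct, Matrix.of_apply, Pi.zero_apply] at h1
      rw [Finset.sum_eq_single q] at h1
      · have h2 : gm σ P p.1 q.1 ≠ 0 := by
          simp only [gm, p, if_true]
          rw [Nat.sub_add_cancel hq2, ← hlead _ hq1]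
          refine mul_ne_zero ?_ (leadingCoeff_ne_zero.2 (hP0 _ hq1))
          exact_mod_cast (Nat.choose_pos hq2).ne'
        exact (mul_eq_zero.1 h1).resolve_left h2
      · intro r _ hrq
        simp only [gm, p]
        split_ifs with h
        · have hr : r.1.1 = q.1.1 := by
            rw [← hσσ _ (mem1 r), ← h, hσσ _ hq1]
          by_cases hlt : r.1.2 < j
          · rw [ih _ hlt r rfl, mul_zero]
          · have hne : r.1.2 ≠ q.1.2 := by
              intro he
              apply hrq
              apply Subtype.ext
              exact Sigma.ext hr (heq_of_eq he)
            rw [hcoef0 _ (mem1 r) _ (by rw [hr]; omega)]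
            simp
        · simp
      · intro h; exact absurd (Finset.mem_univ _) h
    ext q
    exact this _ q rfl
  · intro f
    rw [hankel_eq J α P K σ hσ hα hK hP hre]
    rfl
  · rw [hcS, hcT, hcard, ← Finset.sum_add_distrib]
    refine Finset.sum_congr rfl fun m hm => ?_
    have := hc m hm
    omega
  · intro p hp q hq hpq
    simp only [Finset.mem_filter, Finset.mem_univ, true_and] at hp hq
    simp only [Matrix.of_apply, gm]
    split_ifs with h
    · have hq1 := mem1 q
      have hp2 := mem2 p
      have hq2 := mem2 q
      by_cases hs : σ q.1.1 = q.1.1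
      · rw [hs] at h
        rw [h, hc1 _ hq1 hs] at hp
        rw [hc1 _ hq1 hs] at hq
        rcases calN_S _ _ _ _ hp hq with h1 | h1 | h1
        · rw [hcoef0 _ hq1 _ h1, mul_zero]
        · exact absurd (Subtype.ext (Sigma.ext h (heq_of_eq h1.2.1))) hpq
        · rw [hcoef0 _ hq1 _ h1, mul_zero]
      · exfalso
        rw [h] at hp hp2
        have := hK _ hq1
        have := hc2 _ hq1 hs
        omega
    · rfl
  · intro p hp
    simp only [Finset.mem_filter, Finset.mem_univ, true_and] at hp
    simp only [Matrix.of_apply, gm]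
    split_ifs with h
    · have hp1 := mem1 p
      rw [hc1 _ hp1 h.symm] at hp
      rcases calN_S _ _ _ _ hp hp with h1 | h1 | h1
      · rw [hcoef0 _ hp1 _ h1]; simp
      · rw [h1.1, ← hlead _ hp1, ← Complex.ofReal_natCast, Complex.re_ofReal_mul]
        exact mul_nonneg (Nat.cast_nonneg _) h1.2.2.le
      · rw [hcoef0 _ hp1 _ h1]; simp
    · simp
  · intro p hp q hq hpq
    simp only [Finset.mem_filter, Finset.mem_univ, true_and] at hp hq
    simp only [Matrix.of_apply, gm]
    split_ifs with h
    · have hq1 := mem1 q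
      have hp2 := mem2 p
      have hq2 := mem2 q
      by_cases hs : σ q.1.1 = q.1.1
      · rw [hs] at h
        rw [h, hc1 _ hq1 hs] at hp
        rw [hc1 _ hq1 hs] at hq
        rcases calN_T _ _ _ _ hp hq with h1 | h1
        · rw [hcoef0 _ hq1 _ h1, mul_zero]
        · exact absurd (Subtype.ext (Sigma.ext h (heq_of_eq h1.2.1))) hpq
      · exfalso
        rw [h] at hp hp2
        have := hK _ hq1
        have := hc2 _ hq1 hs
        omega
    · rfl
  · intro p hp
    simp only [Finset.mem_filter, Finset.mem_univ, true_and] at hp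
    simp only [Matrix.of_apply, gm]
    split_ifs with h
    · have hp1 := mem1 p
      rw [hc1 _ hp1 h.symm] at hp
      rcases calN_T _ _ _ _ hp hp with h1 | h1
      · rw [hcoef0 _ hp1 _ h1]; simp
      · rw [h1.1, ← hlead _ hp1, ← Complex.ofReal_natCast, Complex.re_ofReal_mul]
        exact mul_nonpos_of_nonneg_of_nonpos (Nat.cast_nonneg _) h1.2.2
    · simp

theorem half_inertia (M₀ M₁ : ℕ)
    (α : ℕ → ℂ) (P : ℕ → Polynomial ℂ) (K : ℕ → ℕ)
    (hdist : ∀ m ∈ Finset.Icc 1 (M₀ + 2 * M₁), ∀ n ∈ Finset.Icc 1 (M₀ + 2 * M₁),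
      m ≠ n → α m ≠ α n)
    (hre : ∀ m ∈ Finset.Icc 1 (M₀ + 2 * M₁), 0 < (α m).re)
    (hαreal : ∀ m ∈ Finset.Icc 1 M₀, (α m).im = 0)
    (hαconj : ∀ m ∈ Finset.Icc (M₀ + 1) (M₀ + M₁), α (M₁ + m) = starRingEnd ℂ (α m))
    (hdeg : ∀ m ∈ Finset.Icc 1 (M₀ + 2 * M₁), (P m).degree = (K m : WithBot ℕ))
    (hPreal : ∀ m ∈ Finset.Icc 1 M₀, ∀ k : ℕ,
      starRingEnd ℂ ((P m).coeff k) = (P m).coeff k)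
    (hPconj : ∀ m ∈ Finset.Icc (M₀ + 1) (M₀ + M₁), ∀ k : ℕ,
      (P (M₁ + m)).coeff k = starRingEnd ℂ ((P m).coeff k)) :
    Npos (hankelForm (frKernel (M₀ + 2 * M₁) α P)) =
      (∑ m ∈ Finset.Icc 1 M₀, calNpos (K m) ((P m).leadingCoeff.re)) +
        (∑ m ∈ Finset.Icc (M₀ + 1) (M₀ + M₁), K m) + M₁ := by
  let σ : ℕ → ℕ := fun m => if m ≤ M₀ then m else if m ≤ M₀ + M₁ then M₁ + m else m - M₁
  let c : ℕ → ℕ := fun m => if m ≤ M₀ then calNpos (K m) ((P m).leadingCoeff.re) else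
    if m ≤ M₀ + M₁ then K m + 1 else 0
  have hcase : ∀ m ∈ Finset.Icc 1 (M₀ + 2 * M₁), (m ∈ Finset.Icc 1 M₀ ∧ σ m = m ∧
      c m = calNpos (K m) ((P m).leadingCoeff.re)) ∨
      (m ∈ Finset.Icc (M₀ + 1) (M₀ + M₁) ∧ σ m = M₁ + m ∧ σ (M₁ + m) = m ∧ c m = K m + 1
        ∧ c (M₁ + m) = 0) ∨
      (∃ n ∈ Finset.Icc (M₀ + 1) (M₀ + M₁), m = M₁ + n ∧ σ m = n ∧ σ n = m ∧ c m = 0 ∧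
        c n = K n + 1) := by
    intro m hm
    rw [Finset.mem_Icc] at hm
    rcases le_or_gt m M₀ with h | h
    · left; refine ⟨Finset.mem_Icc.2 ⟨hm.1, h⟩, ?_, ?_⟩ <;> simp [σ, c, h]
    · right
      rcases le_or_gt m (M₀ + M₁) with h' | h'
      · left
        have h1 : ¬ m ≤ M₀ := by omega
        have h2 : ¬ M₁ + m ≤ M₀ := by omega
        have h3 : ¬ M₁ + m ≤ M₀ + M₁ := by omega
        refine ⟨Finset.mem_Icc.2 ⟨h, h'⟩, ?_, ?_, ?_, ?_⟩ <;> simp only [σ, c, h1, h2, h3, h', if_false, if_true]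
        omega
      · right
        have h0 : m = M₁ + (m - M₁) := by omega
        have h1 : ¬ m ≤ M₀ := by omega
        have h4 : ¬ m ≤ M₀ + M₁ := by omega
        have h2 : ¬ m - M₁ ≤ M₀ := by omega
        have h3 : m - M₁ ≤ M₀ + M₁ := by omega
        refine ⟨m - M₁, Finset.mem_Icc.2 ⟨by omega, by omega⟩, h0, ?_, ?_, ?_, ?_⟩ <;>
          simp only [σ, c, h1, h2, h3, h4, if_false, if_true]
        omega
  have hKc : ∀ m ∈ Finset.Icc (M₀ + 1) (M₀ + M₁), K (M₁ + m) = K m := by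
    intro m hm
    have hm' := Finset.mem_Icc.1 hm
    have e1 := hdeg m (Finset.mem_Icc.2 ⟨by omega, by omega⟩)
    have e2 := hdeg (M₁ + m) (Finset.mem_Icc.2 ⟨by omega, by omega⟩)
    have e3 : P (M₁ + m) = (P m).map (starRingEnd ℂ) := by
      ext k; rw [coeff_map, hPconj m hm]
    rw [e3, degree_map, e1] at e2
    exact_mod_cast e2.symm
  have hmain := core (Finset.Icc 1 (M₀ + 2 * M₁)) α P K σ c hdist ?_ ?_ ?_ ?_ ?_ ?_ ?_ hre ?_ ?_ ?_
  · refine hmain.trans ?_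
    have e : Finset.Icc 1 (M₀ + 2 * M₁) = (Finset.Icc 1 M₀ ∪ Finset.Icc (M₀ + 1) (M₀ + M₁)) ∪
        Finset.Icc (M₀ + M₁ + 1) (M₀ + 2 * M₁) := by
      ext m; simp only [Finset.mem_union, Finset.mem_Icc]; omega
    rw [e, Finset.sum_union, Finset.sum_union]
    · have e1 : ∑ m ∈ Finset.Icc (M₀ + M₁ + 1) (M₀ + 2 * M₁), c m = 0 := by
        refine Finset.sum_eq_zero fun m hm => ?_
        rw [Finset.mem_Icc] at hm
        simp only [c]
        rw [if_neg (by omega), if_neg (by omega)]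
      have e2 : ∑ m ∈ Finset.Icc (M₀ + 1) (M₀ + M₁), c m =
          (∑ m ∈ Finset.Icc (M₀ + 1) (M₀ + M₁), K m) + M₁ := by
        rw [Finset.sum_congr rfl (g := fun m => K m + 1), Finset.sum_add_distrib]
        · simp
        · intro m hm
          rw [Finset.mem_Icc] at hm
          simp only [c]
          rw [if_neg (by omega), if_pos (by omega)]
      have e3 : ∑ m ∈ Finset.Icc 1 M₀, c m =
          ∑ m ∈ Finset.Icc 1 M₀, calNpos (K m) ((P m).leadingCoeff.re) := by
        refine Finset.sum_congr rfl fun m hm => ?_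
        rw [Finset.mem_Icc] at hm
        simp only [c]
        rw [if_pos (by omega)]
      rw [e1, e2, e3]; omega
    · rw [Finset.disjoint_left]; intro m; simp only [Finset.mem_Icc]; omega
    · rw [Finset.disjoint_left]; intro m; simp only [Finset.mem_union, Finset.mem_Icc]; omega
  · intro m hm
    rw [Finset.mem_Icc] at hm
    rw [Finset.mem_Icc]
    simp only [σ]
    split_ifs <;> omega
  · intro m hm
    rcases hcase m hm with h | h | ⟨n, h⟩
    · rw [h.2.1, h.2.1]
    · rw [h.2.1, h.2.2.1]
    · rw [h.2.2.1, h.2.2.2.1]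
  · intro m hm
    rcases hcase m hm with h | h | ⟨n, h⟩
    · rw [h.2.1]; exact (Complex.conj_eq_iff_im.2 (hαreal m h.1)).symm
    · rw [h.2.1]; exact hαconj m h.1
    · rw [h.2.2.1, h.2.1, hαconj n h.1, Complex.conj_conj]
  · intro m hm
    rcases hcase m hm with h | h | ⟨n, h⟩
    · rw [h.2.1]
    · rw [h.2.1]; exact hKc m h.1
    · rw [h.2.2.1, h.2.1]; exact (hKc n h.1).symm
  · intro m hm
    exact natDegree_eq_of_degree_eq_some (hdeg m hm)
  · intro m hm h
    have := hdeg m hm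
    rw [h, degree_zero] at this
    exact absurd this (by simp)
  · intro m hm k
    rcases hcase m hm with h | h | ⟨n, h⟩
    · rw [h.2.1]; exact (hPreal m h.1 k).symm
    · rw [h.2.1]; exact hPconj m h.1 k
    · rw [h.2.2.1, h.2.1, hPconj n h.1, Complex.conj_conj]
  · intro m hm
    rcases hcase m hm with h | h | ⟨n, h⟩
    · rw [h.2.2]; exact calN_le _ _
    · rw [h.2.2.2.1]
    · rw [h.2.2.2.2.1]; omega
  · intro m hm hs
    rcases hcase m hm with h | h | ⟨n, h⟩
    · exact h.2.2
    · exfalso; have := Finset.mem_Icc.1 h.1; omega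
    · exfalso; have := Finset.mem_Icc.1 h.1; omega
  · intro m hm hs
    rcases hcase m hm with h | h | ⟨n, h⟩
    · exact absurd h.2.1 hs
    · rw [h.2.1]; exact ⟨by omega, by omega⟩
    · have := hKc n h.1
      rw [h.2.2.1]
      obtain ⟨h1, h2, h3, h4, h5, h6⟩ := h
      subst h2
      exact ⟨by omega, by omega⟩

/-- **Total multiplicities of the positive and negative spectra of a finite rank Hankel
operator** (Theorem 1.1 of Yafaev, "On finite rank Hankel operators"):
`N_±(Q_h) = Σ_{m=1}^{M₀} 𝒩_±^{(m)} + Σ_{m=M₀+1}^{M₀+M₁} K_m + M₁`. -/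
theorem finite_rank_hankel_inertia (M₀ M₁ : ℕ) (hM : 1 ≤ M₀ + 2 * M₁)
    (α : ℕ → ℂ) (P : ℕ → Polynomial ℂ) (K : ℕ → ℕ)
    (hdist : ∀ m ∈ Finset.Icc 1 (M₀ + 2 * M₁), ∀ n ∈ Finset.Icc 1 (M₀ + 2 * M₁),
      m ≠ n → α m ≠ α n)
    (hre : ∀ m ∈ Finset.Icc 1 (M₀ + 2 * M₁), 0 < (α m).re)
    (hαreal : ∀ m ∈ Finset.Icc 1 M₀, (α m).im = 0)
    (hαim : ∀ m ∈ Finset.Icc (M₀ + 1) (M₀ + M₁), 0 < (α m).im)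
    (hαconj : ∀ m ∈ Finset.Icc (M₀ + 1) (M₀ + M₁), α (M₁ + m) = starRingEnd ℂ (α m))
    (hdeg : ∀ m ∈ Finset.Icc 1 (M₀ + 2 * M₁), (P m).degree = (K m : WithBot ℕ))
    (hPreal : ∀ m ∈ Finset.Icc 1 M₀, ∀ k : ℕ,
      starRingEnd ℂ ((P m).coeff k) = (P m).coeff k)
    (hPconj : ∀ m ∈ Finset.Icc (M₀ + 1) (M₀ + M₁), ∀ k : ℕ,
      (P (M₁ + m)).coeff k = starRingEnd ℂ ((P m).coeff k)) :
    Npos (hankelForm (frKernel (M₀ + 2 * M₁) α P)) =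
      (∑ m ∈ Finset.Icc 1 M₀, calNpos (K m) ((P m).leadingCoeff.re)) +
        (∑ m ∈ Finset.Icc (M₀ + 1) (M₀ + M₁), K m) + M₁ ∧
    Nneg (hankelForm (frKernel (M₀ + 2 * M₁) α P)) =
      (∑ m ∈ Finset.Icc 1 M₀, calNneg (K m) ((P m).leadingCoeff.re)) +
        (∑ m ∈ Finset.Icc (M₀ + 1) (M₀ + M₁), K m) + M₁ := by
  refine ⟨half_inertia M₀ M₁ α P K hdist hre hαreal hαconj hdeg hPreal hPconj, ?_⟩
  have h := half_inertia M₀ M₁ α (fun m => -P m) K hdist hre hαreal hαconj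
    (fun m hm => by rw [degree_neg]; exact hdeg m hm)
    (fun m hm k => by rw [coeff_neg, map_neg, hPreal m hm])
    (fun m hm k => by rw [coeff_neg, coeff_neg, map_neg, hPconj m hm])
  have hk : frKernel (M₀ + 2 * M₁) α (fun m => -P m) =
      fun t => -frKernel (M₀ + 2 * M₁) α P t := by
    funext t
    simp [frKernel]
  have hf : ∀ f, hankelForm (frKernel (M₀ + 2 * M₁) α (fun m => -P m)) f =
      -hankelForm (frKernel (M₀ + 2 * M₁) α P) f := by
    intro f
    rw [hk]
    simp only [hankelForm, neg_mul, integral_neg, Complex.neg_re]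
  have hN : Npos (hankelForm (frKernel (M₀ + 2 * M₁) α (fun m => -P m))) =
      Nneg (hankelForm (frKernel (M₀ + 2 * M₁) α P)) := by
    simp only [Npos, Nneg, hf, Left.neg_pos_iff]
  rw [← hN, h]
  congr 2
  refine Finset.sum_congr rfl fun m hm => ?_
  have hm' := Finset.mem_Icc.1 hm
  have hd := hdeg m (Finset.mem_Icc.2 ⟨by omega, by omega⟩)
  have hp0 : P m ≠ 0 := by
    intro h0
    rw [h0, degree_zero] at hd
    exact absurd hd (by simp)
  have hl : (P m).leadingCoeff.re ≠ 0 := by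
    intro h0
    have him := Complex.conj_eq_iff_im.1 (hPreal m hm (P m).natDegree)
    exact leadingCoeff_ne_zero.2 hp0 (Complex.ext h0 him)
  simp only [leadingCoeff_neg, Complex.neg_re, calNpos, calNneg, Left.neg_pos_iff]
  rcases lt_or_gt_of_ne hl with h1 | h1
  · simp [h1, h1.not_gt]
  · simp [h1, h1.not_gt]

end
end

section
/- Q_h(f) ≥ 0 for every f ∈ L²(0,∞) if and only if M₁ = 0 and, for every 1 ≤ m ≤ M₀, K_m = 0 and p_m > 0 (i.e. h(t) = Σ_{m=1}^{M₀} p_m e^{−α_m t} with α_m > 0 and p_m > 0). Likewise, Q_h(f) ≤ 0 for every f ∈ L²(0,∞) if and only if M₁ = 0 and, for every m, K_m = 0 and p_m < 0. -/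
open MeasureTheory Complex Polynomial

noncomputable section

/-- operator -/
def Lop (g : ℂ) (R : ℂ[X]) : ℂ[X] := derivative R + C g * R

lemma Lop_inj {g : ℂ} (hg : g ≠ 0) {R : ℂ[X]} (h : Lop g R = 0) : R = 0 := by
  by_contra hR
  have h1 := congrArg (fun p => coeff p R.natDegree) h
  simp only [Lop, coeff_add, coeff_derivative, coeff_C_mul, coeff_zero] at h1
  rw [coeff_eq_zero_of_natDegree_lt (Nat.lt_succ_self _)] at h1
  simp [hg, hR] at h1

lemma Lop_iter_inj {g : ℂ} (hg : g ≠ 0) (n : ℕ) {R : ℂ[X]} (h : (Lop g)^[n] R = 0) : R = 0 := by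
  induction n generalizing R with
  | zero => simpa using h
  | succ n ih => exact Lop_inj hg (ih (by simpa using h))

lemma Lop_zero_iter (n : ℕ) (R : ℂ[X]) : (Lop 0)^[n] R = derivative^[n] R := by
  have : Lop 0 = (fun R => derivative R) := by ext1 R; simp [Lop]
  rw [this]

lemma step (S : Finset ℕ) (β : ℕ → ℂ) (R : ℕ → ℂ[X]) (b : ℂ)
    (h : ∀ t : ℝ, 0 < t → ∑ m ∈ S, (R m).eval (t:ℂ) * cexp (β m * t) = 0) :
    ∀ t : ℝ, 0 < t → ∑ m ∈ S, (Lop (β m - b) (R m)).eval (t:ℂ) * cexp (β m * t) = 0 := by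
  intro t ht
  have h1 : HasDerivAt (fun t : ℝ => ∑ m ∈ S, (R m).eval (t:ℂ) * cexp (β m * t))
      (∑ m ∈ S, ((derivative (R m)).eval (t:ℂ) * cexp (β m * t)
        + (R m).eval (t:ℂ) * (cexp (β m * t) * (β m * 1)))) t := by
    apply HasDerivAt.fun_sum
    intro m _
    have e1 : HasDerivAt (fun z : ℂ => (R m).eval z * cexp (β m * z))
      ((derivative (R m)).eval (t:ℂ) * cexp (β m * t)
        + (R m).eval (t:ℂ) * (cexp (β m * t) * (β m * 1))) (t:ℂ) :=
      ((R m).hasDerivAt _).mul (((hasDerivAt_id _).const_mul (β m)).cexp)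
    exact e1.comp_ofReal
  have h2 : HasDerivAt (fun t : ℝ => ∑ m ∈ S, (R m).eval (t:ℂ) * cexp (β m * t)) 0 t := by
    apply (hasDerivAt_const t (0:ℂ)).congr_of_eventuallyEq
    filter_upwards [lt_mem_nhds ht] with x hx using h x hx
  have h3 := h1.unique h2
  have h4 := h t ht
  calc _ = (∑ m ∈ S, ((derivative (R m)).eval (t:ℂ) * cexp (β m * t)
        + (R m).eval (t:ℂ) * (cexp (β m * t) * (β m * 1)))) - b * ∑ m ∈ S, (R m).eval (t:ℂ) * cexp (β m * t) := by
        rw [Finset.mul_sum, ← Finset.sum_sub_distrib]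
        apply Finset.sum_congr rfl
        intro m _
        simp [Lop]; ring
    _ = 0 := by rw [h3, h4]; simp

lemma step_iter (S : Finset ℕ) (β : ℕ → ℂ) (R : ℕ → ℂ[X]) (b : ℂ) (n : ℕ)
    (h : ∀ t : ℝ, 0 < t → ∑ m ∈ S, (R m).eval (t:ℂ) * cexp (β m * t) = 0) :
    ∀ t : ℝ, 0 < t → ∑ m ∈ S, ((Lop (β m - b))^[n] (R m)).eval (t:ℂ) * cexp (β m * t) = 0 := by
  induction n generalizing R with
  | zero => simpa using h
  | succ n ih => 
    simp only [Function.iterate_succ, Function.comp]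
    exact ih _ (step S β R b h)

lemma exppoly_indep (S : Finset ℕ) (β : ℕ → ℂ) (R : ℕ → ℂ[X])
    (hβ : ∀ m ∈ S, ∀ n ∈ S, m ≠ n → β m ≠ β n)
    (h : ∀ t : ℝ, 0 < t → ∑ m ∈ S, (R m).eval (t:ℂ) * cexp (β m * t) = 0) :
    ∀ m ∈ S, R m = 0 := by
  induction S using Finset.induction_on generalizing R with
  | empty => simp
  | insert a S ha ih =>
    have h1 := step_iter _ β R (β a) ((R a).natDegree + 1) h
    have hS : ∀ m ∈ S, R m = 0 := by
      intro m hm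
      have := ih (fun m => (Lop (β m - β a))^[(R a).natDegree + 1] (R m))
        (fun m hm n hn => hβ m (by simp [hm]) n (by simp [hn])) (by
          intro t ht
          have := h1 t ht
          rw [Finset.sum_insert ha, sub_self, Lop_zero_iter,
            Polynomial.iterate_derivative_eq_zero (Nat.lt_succ_self _)] at this
          simpa using this) m hm
      refine Lop_iter_inj (sub_ne_zero.2 (hβ m (by simp [hm]) a (by simp) ?_)) _ this
      rintro rfl; exact ha hm
    have hRa : R a = 0 := by
      have h2 : ∀ t : ℝ, 0 < t → (R a).eval (t:ℂ) = 0 := by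
        intro t ht
        have := h t ht
        rw [Finset.sum_insert ha, Finset.sum_eq_zero (fun m hm => by simp [hS m hm])] at this
        simpa using this
      apply Polynomial.eq_zero_of_infinite_isRoot
      apply Set.Infinite.mono (s := (fun t : ℝ => (t:ℂ)) '' Set.Ioi 0)
      · rintro _ ⟨t, ht, rfl⟩; exact h2 t ht
      · exact (Set.Ioi_infinite 0).image (Complex.ofReal_injective.injOn)
    intro m hm
    rcases Finset.mem_insert.1 hm with rfl | hm
    · exact hRa
    · exact hS m hm


/-- monomial times exponential -/
def fe (a : ℂ) (j : ℕ) (s : ℝ) : ℂ := (s:ℂ)^j * cexp (-a * s)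

lemma fe_cont (a : ℂ) (j : ℕ) : Continuous (fe a j) := by unfold fe; fun_prop

lemma fe_memLp {a : ℂ} (ha : 0 < a.re) (j : ℕ) : MemLp (fe a j) 2 halfLineMeasure := by
  rw [memLp_two_iff_integrable_sq_norm (fe_cont a j).aestronglyMeasurable]
  have h := integrableOn_rpow_mul_exp_neg_mul_rpow (p := 1) (s := ((2*j : ℕ):ℝ)) (b := 2 * a.re)
    (by have : (0:ℝ) ≤ ((2*j : ℕ):ℝ) := Nat.cast_nonneg _
        linarith) one_pos (by linarith)
  refine (integrable_congr ?_).1 h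
  filter_upwards [ae_restrict_mem measurableSet_Ioi] with s hs
  have hs : 0 < s := hs
  simp only [fe, norm_mul, norm_pow, Complex.norm_exp, Complex.norm_real, Real.norm_eq_abs, abs_of_pos hs]
  rw [Real.rpow_natCast, Real.rpow_one, mul_pow, ← pow_mul, ← Real.exp_nat_mul, mul_comm j 2]
  congr 2
  simp; ring

/-- the functional -/
def ell (a : ℂ) (j : ℕ) (f : Lp ℂ 2 halfLineMeasure) : ℂ := ∫ s, fe a j s * f s ∂halfLineMeasure

lemma fe_mul_int {a : ℂ} (ha : 0 < a.re) (j : ℕ) (f : Lp ℂ 2 halfLineMeasure) :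
    Integrable (fun s => fe a j s * f s) halfLineMeasure :=
  (fe_memLp ha j).integrable_mul (Lp.memLp f)

lemma fe_mul_int_conj {a : ℂ} (ha : 0 < a.re) (j : ℕ) (f : Lp ℂ 2 halfLineMeasure) :
    Integrable (fun s => fe a j s * starRingEnd ℂ (f s)) halfLineMeasure :=
  (fe_memLp ha j).integrable_mul (Lp.memLp f).star

lemma fe_conj (a : ℂ) (j : ℕ) (s : ℝ) : fe (starRingEnd ℂ a) j s = starRingEnd ℂ (fe a j s) := by
  simp [fe, ← Complex.exp_conj]

lemma int_conj (a : ℂ) (j : ℕ) (f : Lp ℂ 2 halfLineMeasure) :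
    ∫ s, fe a j s * starRingEnd ℂ (f s) ∂halfLineMeasure
      = starRingEnd ℂ (ell (starRingEnd ℂ a) j f) := by
  rw [ell, ← integral_conj]
  simp [fe_conj]

/-- the functionals as linear map -/
def ellL {a : ℂ} (ha : 0 < a.re) (j : ℕ) : Lp ℂ 2 halfLineMeasure →ₗ[ℂ] ℂ where
  toFun := ell a j
  map_add' f g := by
    unfold ell
    rw [← integral_add (fe_mul_int ha j f) (fe_mul_int ha j g)]
    apply integral_congr_ae
    filter_upwards [Lp.coeFn_add f g] with s hs
    rw [hs, Pi.add_apply]; ring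
  map_smul' c f := by
    unfold ell
    rw [RingHom.id_apply, smul_eq_mul, ← integral_const_mul]
    apply integral_congr_ae
    filter_upwards [Lp.coeFn_smul c f] with s hs
    rw [hs, Pi.smul_apply, smul_eq_mul]; ring

lemma ell_surj (S : Finset ℕ) (α : ℕ → ℂ) (N : ℕ)
    (hα : ∀ m ∈ S, ∀ n ∈ S, m ≠ n → α m ≠ α n) (hre : ∀ m ∈ S, 0 < (α m).re)
    (v : ℕ → ℕ → ℂ) :
    ∃ f : Lp ℂ 2 halfLineMeasure, ∀ m ∈ S, ∀ j ∈ Finset.range (N+1), ell (α m) j f = v m j := by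
  classical
  set F := S ×ˢ Finset.range (N+1) with hF
  have hFre : ∀ i ∈ F, 0 < (α i.1).re := fun i hi => hre _ (Finset.mem_product.1 hi).1
  let T : Lp ℂ 2 halfLineMeasure →ₗ[ℂ] (F → ℂ) :=
    LinearMap.pi (fun i => ellL (hFre i.1 i.2) i.1.2)
  have hT : ∀ f i, T f i = ell (α i.1.1) i.1.2 f := fun f i => rfl
  suffices hs : Function.Surjective T by
    obtain ⟨f, hf⟩ := hs (fun i => v i.1.1 i.1.2)
    refine ⟨f, fun m hm j hj => ?_⟩
    have := congrFun hf ⟨(m, j), Finset.mem_product.2 ⟨hm, hj⟩⟩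
    rwa [hT] at this
  rw [← LinearMap.range_eq_top]
  by_contra hne
  obtain ⟨φ, hφ0, hφ⟩ := Submodule.exists_le_ker_of_lt_top _ (lt_top_iff_ne_top.2 hne)
  apply hφ0
  let c : ℕ × ℕ → ℂ := fun i => if h : i ∈ F then φ (Pi.single ⟨i, h⟩ 1) else 0
  have hφc : ∀ x : F → ℂ, φ x = ∑ i : F, x i * c i.1 := by
    intro x
    rw [LinearMap.pi_apply_eq_sum_univ φ x]
    apply Finset.sum_congr rfl
    rintro ⟨i, hi⟩ _
    simp only [c, hi, dif_pos, smul_eq_mul]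
    congr 3
    ext k; simp [Pi.single_apply, eq_comm]
  let g : ℝ → ℂ := fun s => ∑ i ∈ F, c i * fe (α i.1) i.2 s
  have hg : MemLp g 2 halfLineMeasure :=
    memLp_finsetSum _ (fun i hi => (fe_memLp (hFre i hi) i.2).const_mul _)
  have hgc : Continuous g := by
    apply continuous_finsetSum
    intro i _
    exact continuous_const.mul (fe_cont _ _)
  have h0 : ∀ f : Lp ℂ 2 halfLineMeasure, ∫ s, g s * f s ∂halfLineMeasure = 0 := by
    intro f
    have h1 : φ (T f) = 0 := hφ ⟨f, rfl⟩
    rw [hφc] at h1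
    simp only [hT] at h1
    rw [Finset.sum_coe_sort F (fun i => ell (α i.1) i.2 f * c i)] at h1
    rw [← h1]
    simp only [g, Finset.sum_mul]
    rw [integral_finsetSum]
    · apply Finset.sum_congr rfl
      intro i hi
      simp only [mul_assoc]
      rw [integral_const_mul, mul_comm]; rfl
    · intro i hi
      simp only [mul_assoc]
      exact (fe_mul_int (hFre i hi) i.2 f).const_mul _
  have h1 := h0 (hg.star.toLp _)
  have h2 : ∫ s, ‖g s‖^2 ∂halfLineMeasure = 0 := by
    have : ((∫ s, ‖g s‖^2 ∂halfLineMeasure : ℝ) : ℂ) = 0 := by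
      rw [← h1, ← integral_complex_ofReal]
      apply integral_congr_ae
      filter_upwards [hg.star.coeFn_toLp] with s hs
      rw [hs]
      simp [Complex.mul_conj, Complex.normSq_eq_norm_sq]
    exact_mod_cast this
  rw [integral_eq_zero_iff_of_nonneg (fun s => by positivity)
    ((memLp_two_iff_integrable_sq_norm hg.1).1 hg)] at h2
  have h3 : g =ᵐ[volume.restrict (Set.Ioi (0:ℝ))] (fun _ => (0:ℂ)) := by
    filter_upwards [h2] with s hs
    simpa using hs
  have h4 := Measure.eqOn_open_of_ae_eq h3 isOpen_Ioi hgc.continuousOn continuousOn_const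
  have h5 := exppoly_indep S (fun m => - α m)
    (fun m => ∑ j ∈ Finset.range (N+1), Polynomial.C (c (m, j)) * X^j)
    (fun m hm n hn hmn h => hα m hm n hn hmn (neg_injective h)) (by
      intro t ht
      have := h4 (show t ∈ Set.Ioi (0:ℝ) from ht)
      simp only [g, hF, Finset.sum_product] at this
      rw [← this]
      apply Finset.sum_congr rfl
      intro m _
      rw [eval_finsetSum, Finset.sum_mul]
      apply Finset.sum_congr rfl
      intro j _
      simp [fe]; ring)
  ext x
  have h6 : ∀ i ∈ F, c i = 0 := by
    rintro ⟨m, j⟩ hi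
    have hmj := Finset.mem_product.1 hi
    have := congrArg (fun p => coeff p j) (h5 m hmj.1)
    have hj : j < N + 1 := by simpa using hmj.2
    simpa [coeff_X_pow, hj] using this
  rw [LinearMap.comp_apply, hφc]
  simp only [LinearMap.zero_comp, LinearMap.zero_apply]
  exact Finset.sum_eq_zero (fun i _ => by rw [h6 _ i.2, mul_zero])

/-- coefficients -/
def cc (P : ℂ[X]) (j k : ℕ) : ℂ := ((k + j).choose j : ℂ) * P.coeff (k + j)

lemma eval_add_cc (P : ℂ[X]) (N : ℕ) (hN : P.natDegree ≤ N) (s t : ℂ) :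
    P.eval (t + s) = ∑ j ∈ Finset.range (N+1), ∑ k ∈ Finset.range (N+1), cc P j k * s^j * t^k := by
  rw [add_comm t s, ← taylor_eval, eval_eq_sum_range' (n := N+1) (by rw [natDegree_taylor]; omega)]
  apply Finset.sum_congr rfl
  intro j _
  rw [taylor_coeff, eval_eq_sum_range' (n := N+1)
    (by have := natDegree_hasseDeriv_le P j; omega), Finset.sum_mul]
  apply Finset.sum_congr rfl
  intro k _
  rw [hasseDeriv_coeff, cc]; ring

lemma hankel_expand (S : Finset ℕ) (α : ℕ → ℂ) (P : ℕ → ℂ[X]) (N : ℕ)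
    (hre : ∀ m ∈ S, 0 < (α m).re) (hN : ∀ m ∈ S, (P m).natDegree ≤ N)
    (f : Lp ℂ 2 halfLineMeasure) :
    hankelForm (fun t => ∑ m ∈ S, (P m).eval (t : ℂ) * Complex.exp (-α m * t)) f =
      (∑ m ∈ S, ∑ j ∈ Finset.range (N+1), ∑ k ∈ Finset.range (N+1),
        cc (P m) j k * (ell (α m) j f * starRingEnd ℂ (ell (starRingEnd ℂ (α m)) k f))).re := by
  unfold hankelForm
  congr 1
  set F := S ×ˢ (Finset.range (N+1) ×ˢ Finset.range (N+1)) with hF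
  have hFre : ∀ i ∈ F, 0 < (α i.1).re := fun i hi => hre _ (Finset.mem_product.1 hi).1
  have key : ∀ t s : ℝ, ∑ m ∈ S, (P m).eval ((t+s : ℝ) : ℂ) * Complex.exp (-α m * (t+s : ℝ)) =
      ∑ i ∈ F, cc (P i.1) i.2.1 i.2.2 * fe (α i.1) i.2.1 s * fe (α i.1) i.2.2 t := by
    intro t s
    rw [hF, Finset.sum_product]
    apply Finset.sum_congr rfl
    intro m hm
    rw [Finset.sum_product, Complex.ofReal_add, eval_add_cc _ N (hN m hm), mul_add, Complex.exp_add]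
    simp only [Finset.sum_mul]
    refine Finset.sum_congr rfl fun j _ => Finset.sum_congr rfl fun k _ => ?_
    simp only [fe]; ring
  simp only [key]
  have inner : ∀ t : ℝ, ∫ s, (∑ i ∈ F, cc (P i.1) i.2.1 i.2.2 * fe (α i.1) i.2.1 s * fe (α i.1) i.2.2 t)
      * f s * starRingEnd ℂ (f t) ∂halfLineMeasure =
      ∑ i ∈ F, (cc (P i.1) i.2.1 i.2.2 * ell (α i.1) i.2.1 f) *
        (fe (α i.1) i.2.2 t * starRingEnd ℂ (f t)) := by
    intro t
    have e : ∀ s, (∑ i ∈ F, cc (P i.1) i.2.1 i.2.2 * fe (α i.1) i.2.1 s * fe (α i.1) i.2.2 t)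
      * f s * starRingEnd ℂ (f t) = ∑ i ∈ F, (cc (P i.1) i.2.1 i.2.2 *
        (fe (α i.1) i.2.2 t * starRingEnd ℂ (f t))) * (fe (α i.1) i.2.1 s * f s) := by
      intro s
      simp only [Finset.sum_mul]
      refine Finset.sum_congr rfl fun i _ => ?_
      ring
    simp only [e]
    rw [integral_finsetSum _ (fun i hi => (fe_mul_int (hFre i hi) _ f).const_mul _)]
    refine Finset.sum_congr rfl fun i _ => ?_
    rw [integral_const_mul, ell]; ring
  simp only [inner]
  rw [integral_finsetSum _ (fun i hi => (fe_mul_int_conj (hFre i hi) _ f).const_mul _), hF,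
    Finset.sum_product]
  refine Finset.sum_congr rfl fun m _ => ?_
  rw [Finset.sum_product]
  refine Finset.sum_congr rfl fun j _ => Finset.sum_congr rfl fun k _ => ?_
  rw [integral_const_mul, int_conj]; ring


lemma exists_val (S : Finset ℕ) (α : ℕ → ℂ) (P : ℕ → ℂ[X]) (N : ℕ) (σ : ℕ → ℕ)
    (hα : ∀ m ∈ S, ∀ n ∈ S, m ≠ n → α m ≠ α n)
    (hre : ∀ m ∈ S, 0 < (α m).re) (hN : ∀ m ∈ S, (P m).natDegree ≤ N)
    (hσ : ∀ m ∈ S, σ m ∈ S) (hσα : ∀ m ∈ S, α (σ m) = starRingEnd ℂ (α m))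
    (v : ℕ → ℕ → ℂ) : ∃ f : Lp ℂ 2 halfLineMeasure,
    hankelForm (fun t => ∑ m ∈ S, (P m).eval (t : ℂ) * Complex.exp (-α m * t)) f =
      (∑ m ∈ S, ∑ j ∈ Finset.range (N+1), ∑ k ∈ Finset.range (N+1),
        cc (P m) j k * (v m j * starRingEnd ℂ (v (σ m) k))).re := by
  obtain ⟨f, hf⟩ := ell_surj S α N hα hre v
  refine ⟨f, ?_⟩
  rw [hankel_expand S α P N hre hN f]
  congr 1
  refine Finset.sum_congr rfl fun m hm => Finset.sum_congr rfl fun j hj =>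
    Finset.sum_congr rfl fun k hk => ?_
  rw [hf m hm j hj, ← hσα m hm, hf _ (hσ m hm) k hk]

lemma caseA (S : Finset ℕ) (α : ℕ → ℂ) (P : ℕ → ℂ[X]) (N : ℕ) (σ : ℕ → ℕ)
    (hα : ∀ m ∈ S, ∀ n ∈ S, m ≠ n → α m ≠ α n)
    (hre : ∀ m ∈ S, 0 < (α m).re) (hN : ∀ m ∈ S, (P m).natDegree ≤ N)
    (hσ : ∀ m ∈ S, σ m ∈ S) (hσα : ∀ m ∈ S, α (σ m) = starRingEnd ℂ (α m))
    (hσσ : ∀ m ∈ S, σ (σ m) = m)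
    (hσP : ∀ m ∈ S, ∀ k, (P (σ m)).coeff k = starRingEnd ℂ ((P m).coeff k))
    (m₀ : ℕ) (hm : m₀ ∈ S) (hne : σ m₀ ≠ m₀) (x : ℝ) : ∃ f : Lp ℂ 2 halfLineMeasure,
    hankelForm (fun t => ∑ m ∈ S, (P m).eval (t : ℂ) * Complex.exp (-α m * t)) f =
      2 * x * normSq (P m₀).leadingCoeff := by
  set K := (P m₀).natDegree with hK
  set p := (P m₀).leadingCoeff with hp
  have hpK : (P m₀).coeff K = p := rfl
  have hKN : K < N + 1 := by have := hN m₀ hm; omega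
  obtain ⟨f, hf⟩ := exists_val S α P N σ hα hre hN hσ hσα (fun m j =>
    if m = m₀ then (if j = 0 then 1 else 0) else if m = σ m₀ then (if j = K then x * p else 0) else 0)
  refine ⟨f, ?_⟩
  rw [hf]
  have e : ∀ m ∈ S, ∀ j k, cc (P m) j k * ((if m = m₀ then (if j = 0 then 1 else 0) else if m = σ m₀ then (if j = K then x * p else 0) else 0) *
      starRingEnd ℂ (if σ m = m₀ then (if k = 0 then 1 else 0) else if σ m = σ m₀ then (if k = K then x * p else 0) else 0))
      = (if m = m₀ then (if j = 0 then (if k = K then cc (P m₀) 0 K * starRingEnd ℂ (x * p) else 0) else 0) else 0)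
       + (if m = σ m₀ then (if j = K then (if k = 0 then cc (P (σ m₀)) K 0 * (x * p) else 0) else 0) else 0) := by
    intro m hmS j k
    by_cases h1 : m = m₀
    · subst h1
      by_cases hj : j = 0 <;> by_cases hk : k = K <;> simp [hj, hk, hne, hne.symm]
    · by_cases h2 : m = σ m₀
      · have h3 : σ m = m₀ := by rw [h2, hσσ _ hm]
        rw [← h2] at hne ⊢
        by_cases hj : j = K <;> by_cases hk : k = 0 <;> simp [hj, hk, h1, h3]
      · simp [h1, h2]
  rw [Finset.sum_congr rfl fun m hmS => Finset.sum_congr rfl fun j _ =>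
    Finset.sum_congr rfl fun k _ => e m hmS j k]
  have h1 : cc (P m₀) 0 K = p := by simp [cc, hpK]
  have h2 : cc (P (σ m₀)) K 0 = starRingEnd ℂ p := by simp [cc, hσP m₀ hm, hpK]
  simp only [Finset.sum_add_distrib]
  have a1 : ∀ z : ℂ, ∀ n ∈ S, ∀ J ∈ Finset.range (N+1), ∀ L ∈ Finset.range (N+1),
      ∑ m ∈ S, ∑ j ∈ Finset.range (N+1), ∑ k ∈ Finset.range (N+1),
      (if m = n then (if j = J then (if k = L then z else 0) else 0) else 0) = z := by
    intro z n hn J hJ L hL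
    rw [Finset.sum_eq_single_of_mem n hn (by intro b _ hb; simp [hb]),
      Finset.sum_eq_single_of_mem J hJ (by intro b _ hb; simp [hb]),
      Finset.sum_eq_single_of_mem L hL (by intro b _ hb; simp [hb])]
    simp
  rw [a1 _ _ hm _ (by simp) _ (by simp [hKN]), a1 _ _ (hσ _ hm) _ (by simp [hKN]) _ (by simp),
    h1, h2]
  simp [normSq_apply]; ring

lemma caseB (S : Finset ℕ) (α : ℕ → ℂ) (P : ℕ → ℂ[X]) (N : ℕ) (σ : ℕ → ℕ)
    (hα : ∀ m ∈ S, ∀ n ∈ S, m ≠ n → α m ≠ α n)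
    (hre : ∀ m ∈ S, 0 < (α m).re) (hN : ∀ m ∈ S, (P m).natDegree ≤ N)
    (hσ : ∀ m ∈ S, σ m ∈ S) (hσα : ∀ m ∈ S, α (σ m) = starRingEnd ℂ (α m))
    (m₀ : ℕ) (hm : m₀ ∈ S) (hne : σ m₀ = m₀) (b : ℂ)
    (hK0 : (P m₀).natDegree ≠ 0) : ∃ f : Lp ℂ 2 halfLineMeasure,
    hankelForm (fun t => ∑ m ∈ S, (P m).eval (t : ℂ) * Complex.exp (-α m * t)) f =
      ((P m₀).coeff 0 + (P m₀).leadingCoeff * (b + starRingEnd ℂ b)).re := by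
  set K := (P m₀).natDegree with hK
  set p := (P m₀).leadingCoeff with hp
  have hpK : (P m₀).coeff K = p := rfl
  have hKN : K < N + 1 := by have := hN m₀ hm; omega
  obtain ⟨f, hf⟩ := exists_val S α P N σ hα hre hN hσ hσα (fun m j =>
    if m = m₀ then ((if j = 0 then 1 else 0) + (if j = K then b else 0)) else 0)
  refine ⟨f, ?_⟩
  rw [hf]
  rw [Finset.sum_eq_single_of_mem m₀ hm (by intro b _ hb; simp [hb])]
  have h1 : cc (P m₀) 0 K = p := by simp [cc, hpK]
  have h2 : cc (P m₀) K 0 = p := by simp [cc, hpK]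
  have h3 : cc (P m₀) 0 0 = (P m₀).coeff 0 := by simp [cc]
  have h4 : cc (P m₀) K K = 0 := by
    rw [cc, coeff_eq_zero_of_natDegree_lt (by omega), mul_zero]
  simp only [hne, if_true, map_add, mul_add, add_mul, Finset.sum_add_distrib]
  have a1 : ∀ z w : ℂ, ∀ J ∈ Finset.range (N+1), ∀ L ∈ Finset.range (N+1),
      ∑ j ∈ Finset.range (N+1), ∑ k ∈ Finset.range (N+1),
      cc (P m₀) j k * ((if j = J then z else 0) * (starRingEnd ℂ (if k = L then w else 0))) =
        cc (P m₀) J L * (z * starRingEnd ℂ w) := by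
    intro z w J hJ L hL
    rw [Finset.sum_eq_single_of_mem J hJ (by intro b _ hb; simp [hb]),
      Finset.sum_eq_single_of_mem L hL (by intro b _ hb; simp [hb])]
    simp
  have z0 : 0 ∈ Finset.range (N+1) := by simp
  have zK : K ∈ Finset.range (N+1) := by simp [hKN]
  rw [a1 _ _ _ z0 _ z0, a1 _ _ _ z0 _ zK, a1 _ _ _ zK _ z0, a1 _ _ _ zK _ zK, h1, h2, h3, h4]
  simp; ring

lemma caseC (S : Finset ℕ) (α : ℕ → ℂ) (P : ℕ → ℂ[X]) (N : ℕ) (σ : ℕ → ℕ)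
    (hα : ∀ m ∈ S, ∀ n ∈ S, m ≠ n → α m ≠ α n)
    (hre : ∀ m ∈ S, 0 < (α m).re) (hN : ∀ m ∈ S, (P m).natDegree ≤ N)
    (hσ : ∀ m ∈ S, σ m ∈ S) (hσα : ∀ m ∈ S, α (σ m) = starRingEnd ℂ (α m))
    (m₀ : ℕ) (hm : m₀ ∈ S) (hne : σ m₀ = m₀) : ∃ f : Lp ℂ 2 halfLineMeasure,
    hankelForm (fun t => ∑ m ∈ S, (P m).eval (t : ℂ) * Complex.exp (-α m * t)) f =
      ((P m₀).coeff 0).re := by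
  obtain ⟨f, hf⟩ := exists_val S α P N σ hα hre hN hσ hσα (fun m j =>
    if m = m₀ then (if j = 0 then 1 else 0) else 0)
  refine ⟨f, ?_⟩
  rw [hf]
  rw [Finset.sum_eq_single_of_mem m₀ hm (by intro b _ hb; simp [hb]),
      Finset.sum_eq_single_of_mem 0 (by simp) (by intro b _ hb; simp [hb]),
      Finset.sum_eq_single_of_mem 0 (by simp) (by intro b _ hb; simp [hb])]
  simp [hne, cc]

lemma rev_val (S : Finset ℕ) (α : ℕ → ℂ) (P : ℕ → ℂ[X])
    (hre : ∀ m ∈ S, 0 < (α m).re) (hN : ∀ m ∈ S, (P m).natDegree ≤ 0)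
    (hα : ∀ m ∈ S, (α m).im = 0) (f : Lp ℂ 2 halfLineMeasure) :
    hankelForm (fun t => ∑ m ∈ S, (P m).eval (t : ℂ) * Complex.exp (-α m * t)) f =
      ∑ m ∈ S, (P m).leadingCoeff.re * normSq (ell (α m) 0 f) := by
  rw [hankel_expand S α P 0 hre hN f, Complex.re_sum]
  refine Finset.sum_congr rfl fun m hm => ?_
  have h1 : starRingEnd ℂ (α m) = α m := Complex.conj_eq_iff_im.2 (hα m hm)
  have h2 : (P m).natDegree = 0 := by have := hN m hm; omega
  simp only [zero_add, Finset.sum_range_one, h1, Complex.mul_conj, Complex.re_mul_ofReal]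
  simp [cc, leadingCoeff, h2]

/-- **Sign-definite finite rank Hankel operators** (Corollary 1.2 of Yafaev, "On finite
rank Hankel operators"): the form `Q_h` is nonnegative iff `M₁ = 0` and every real term
is a positive multiple of a pure exponential (`K_m = 0` and `p_m > 0`), i.e.
`h(t) = Σ p_m e^{−α_m t}` with `α_m > 0`, `p_m > 0`; and likewise for nonpositivity with
`p_m < 0`. -/
theorem finite_rank_hankel_sign_definite (M₀ M₁ : ℕ) (hM : 1 ≤ M₀ + 2 * M₁)
    (α : ℕ → ℂ) (P : ℕ → Polynomial ℂ) (K : ℕ → ℕ)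
    (hdist : ∀ m ∈ Finset.Icc 1 (M₀ + 2 * M₁), ∀ n ∈ Finset.Icc 1 (M₀ + 2 * M₁),
      m ≠ n → α m ≠ α n)
    (hre : ∀ m ∈ Finset.Icc 1 (M₀ + 2 * M₁), 0 < (α m).re)
    (hαreal : ∀ m ∈ Finset.Icc 1 M₀, (α m).im = 0)
    (hαim : ∀ m ∈ Finset.Icc (M₀ + 1) (M₀ + M₁), 0 < (α m).im)
    (hαconj : ∀ m ∈ Finset.Icc (M₀ + 1) (M₀ + M₁), α (M₁ + m) = starRingEnd ℂ (α m))
    (hdeg : ∀ m ∈ Finset.Icc 1 (M₀ + 2 * M₁), (P m).degree = (K m : WithBot ℕ))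
    (hPreal : ∀ m ∈ Finset.Icc 1 M₀, ∀ k : ℕ,
      starRingEnd ℂ ((P m).coeff k) = (P m).coeff k)
    (hPconj : ∀ m ∈ Finset.Icc (M₀ + 1) (M₀ + M₁), ∀ k : ℕ,
      (P (M₁ + m)).coeff k = starRingEnd ℂ ((P m).coeff k)) :
    ((∀ f : Lp ℂ 2 halfLineMeasure, 0 ≤ hankelForm (frKernel (M₀ + 2 * M₁) α P) f) ↔
      (M₁ = 0 ∧ ∀ m ∈ Finset.Icc 1 M₀, K m = 0 ∧ 0 < (P m).leadingCoeff.re)) ∧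
    ((∀ f : Lp ℂ 2 halfLineMeasure, hankelForm (frKernel (M₀ + 2 * M₁) α P) f ≤ 0) ↔
      (M₁ = 0 ∧ ∀ m ∈ Finset.Icc 1 M₀, K m = 0 ∧ (P m).leadingCoeff.re < 0)) := by
  classical
  set S := Finset.Icc 1 (M₀ + 2 * M₁) with hS
  have hk : frKernel (M₀ + 2 * M₁) α P =
    (fun t : ℝ => ∑ m ∈ S, (P m).eval (t : ℂ) * Complex.exp (-α m * t)) := rfl
  rw [hk]
  have hnd : ∀ m ∈ S, (P m).natDegree = K m := fun m hm => natDegree_eq_of_degree_eq_some (hdeg m hm)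
  have hP0 : ∀ m ∈ S, P m ≠ 0 := by
    intro m hm h
    have := hdeg m hm
    rw [h, degree_zero] at this
    simp at this
  set N := S.sup K with hNdef
  have hN : ∀ m ∈ S, (P m).natDegree ≤ N := fun m hm => by
    rw [hnd m hm]; exact Finset.le_sup hm
  let σ : ℕ → ℕ := fun m => if m ≤ M₀ then m else if m ≤ M₀ + M₁ then M₁ + m else m - M₁
  have cases : ∀ m ∈ S, (m ∈ Finset.Icc 1 M₀ ∧ σ m = m) ∨
      (m ∈ Finset.Icc (M₀+1) (M₀+M₁) ∧ σ m = M₁ + m ∧ σ (M₁ + m) = m) ∨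
      (∃ n ∈ Finset.Icc (M₀+1) (M₀+M₁), m = M₁ + n ∧ σ m = n ∧ σ n = m) := by
    intro m hm
    simp only [hS, Finset.mem_Icc] at hm
    by_cases h1 : m ≤ M₀
    · left; exact ⟨by simp; omega, by simp [σ, h1]⟩
    · by_cases h2 : m ≤ M₀ + M₁
      · right; left
        refine ⟨by simp; omega, by simp [σ, h1, h2], ?_⟩
        simp only [σ]
        rw [if_neg (by omega), if_neg (by omega)]; omega
      · right; right
        refine ⟨m - M₁, by simp; omega, by omega, by simp [σ, h1, h2], ?_⟩
        simp only [σ]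
        rw [if_neg (by omega), if_pos (by omega)]; omega
  have hσ : ∀ m ∈ S, σ m ∈ S := by
    intro m hm
    rcases cases m hm with ⟨_, h⟩ | ⟨h', h, _⟩ | ⟨n, hn, _, h, _⟩
    · rwa [h]
    · rw [h]; simp [hS] at h' ⊢; omega
    · rw [h]; simp [hS] at hn ⊢; omega
  have hσσ : ∀ m ∈ S, σ (σ m) = m := by
    intro m hm
    rcases cases m hm with ⟨_, h⟩ | ⟨h', h, h2⟩ | ⟨n, hn, _, h, h2⟩
    · rw [h, h]
    · rw [h, h2]
    · rw [h, h2]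
  have hσα : ∀ m ∈ S, α (σ m) = starRingEnd ℂ (α m) := by
    intro m hm
    rcases cases m hm with ⟨h', h⟩ | ⟨h', h, h2⟩ | ⟨n, hn, h3, h, h2⟩
    · rw [h, Complex.conj_eq_iff_im.2 (hαreal m h')]
    · rw [h, hαconj m h']
    · rw [h, h3, hαconj n hn, Complex.conj_conj]
  have hσP : ∀ m ∈ S, ∀ k, (P (σ m)).coeff k = starRingEnd ℂ ((P m).coeff k) := by
    intro m hm k
    rcases cases m hm with ⟨h', h⟩ | ⟨h', h, h2⟩ | ⟨n, hn, h3, h, h2⟩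
    · rw [h, hPreal m h']
    · rw [h, hPconj m h']
    · rw [h, h3, hPconj n hn, Complex.conj_conj]
  set Q := hankelForm (fun t : ℝ => ∑ m ∈ S, (P m).eval (t : ℂ) * Complex.exp (-α m * t)) with hQ
  have A : M₁ ≠ 0 → ∃ c : ℝ, 0 < c ∧ ∀ x : ℝ, ∃ f, Q f = 2 * x * c := by
    intro hM1
    have hm : M₀ + 1 ∈ S := by simp [hS]; omega
    refine ⟨normSq (P (M₀+1)).leadingCoeff, normSq_pos.2 (leadingCoeff_ne_zero.2 (hP0 _ hm)), ?_⟩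
    exact caseA S α P N σ hdist hre hN hσ hσα hσσ hσP (M₀+1) hm (by
      simp only [σ]; rw [if_neg (by omega), if_pos (by omega)]; omega)
  have sub : ∀ m ∈ Finset.Icc 1 M₀, m ∈ S ∧ σ m = m := by
    intro m hm
    simp only [Finset.mem_Icc] at hm
    exact ⟨by simp [hS]; omega, by simp [σ, hm.2]⟩
  have B : ∀ m ∈ Finset.Icc 1 M₀, K m ≠ 0 → ∃ c : ℝ, ∀ x : ℝ, ∃ f, Q f = c + 2 * x := by
    intro m hm hK
    obtain ⟨hmS, hσm⟩ := sub m hm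
    refine ⟨((P m).coeff 0).re, fun x => ?_⟩
    have hp0 : (P m).leadingCoeff ≠ 0 := leadingCoeff_ne_zero.2 (hP0 _ hmS)
    obtain ⟨f, hf⟩ := caseB S α P N σ hdist hre hN hσ hσα m hmS hσm (x / (P m).leadingCoeff)
      (by rwa [hnd m hmS])
    refine ⟨f, hf.trans ?_⟩
    have : starRingEnd ℂ (P m).leadingCoeff = (P m).leadingCoeff := hPreal m hm _
    rw [map_div₀, this, Complex.conj_ofReal, mul_add, mul_div_cancel₀ _ hp0]
    simp; ring
  have Cc : ∀ m ∈ Finset.Icc 1 M₀, K m = 0 → (P m).leadingCoeff.re ≠ 0 ∧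
      ∃ f, Q f = (P m).leadingCoeff.re := by
    intro m hm hK
    obtain ⟨hmS, hσm⟩ := sub m hm
    have hp0 : (P m).leadingCoeff ≠ 0 := leadingCoeff_ne_zero.2 (hP0 _ hmS)
    have him := Complex.conj_eq_iff_im.1 (hPreal m hm (P m).natDegree)
    refine ⟨fun h => hp0 (Complex.ext h him), ?_⟩
    obtain ⟨f, hf⟩ := caseC S α P N σ hdist hre hN hσ hσα m hmS hσm
    refine ⟨f, hf.trans ?_⟩
    rw [leadingCoeff, hnd m hmS, hK]
  have R : M₁ = 0 → (∀ m ∈ Finset.Icc 1 M₀, K m = 0) → ∀ f, Q f =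
      ∑ m ∈ Finset.Icc 1 M₀, (P m).leadingCoeff.re * normSq (ell (α m) 0 f) := by
    intro h1 h2 f
    have hSS : S = Finset.Icc 1 M₀ := by simp [hS, h1]
    rw [← hSS]
    exact rev_val S α P hre (fun m hm => by rw [hnd m hm, h2 m (hSS ▸ hm)])
      (fun m hm => hαreal m (hSS ▸ hm)) f
  constructor
  · constructor
    · intro h
      refine ⟨?_, fun m hm => ?_⟩
      · by_contra hne
        obtain ⟨c, hc, hx⟩ := A hne
        obtain ⟨f, hf⟩ := hx (-1)
        have := h f
        linarith
      · have hK : K m = 0 := by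
          by_contra hne
          obtain ⟨c, hx⟩ := B m hm hne
          obtain ⟨f, hf⟩ := hx (-(c+1)/2 - 1)
          have := h f
          linarith
        obtain ⟨h0, f, hf⟩ := Cc m hm hK
        exact ⟨hK, lt_of_le_of_ne (hf ▸ h f) h0.symm⟩
    · rintro ⟨h1, h2⟩ f
      rw [R h1 (fun m hm => (h2 m hm).1) f]
      exact Finset.sum_nonneg fun m hm => mul_nonneg (h2 m hm).2.le (normSq_nonneg _)
  · constructor
    · intro h
      refine ⟨?_, fun m hm => ?_⟩
      · by_contra hne
        obtain ⟨c, hc, hx⟩ := A hne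
        obtain ⟨f, hf⟩ := hx 1
        have := h f
        linarith
      · have hK : K m = 0 := by
          by_contra hne
          obtain ⟨c, hx⟩ := B m hm hne
          obtain ⟨f, hf⟩ := hx ((1-c)/2)
          have := h f
          linarith
        obtain ⟨h0, f, hf⟩ := Cc m hm hK
        exact ⟨hK, lt_of_le_of_ne (hf ▸ h f) h0⟩
    · rintro ⟨h1, h2⟩ f
      rw [R h1 (fun m hm => (h2 m hm).1) f]
      exact Finset.sum_nonpos fun m hm => mul_nonpos_of_nonpos_of_nonneg (h2 m hm).2.le (normSq_nonneg _)

end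
end

section
/- Let Q_C(f) = ∫₀^∞∫₀^∞ ( (t+s)^{−1} + h(t+s) ) f(s) conj(f(t)) ds dt for f ∈ L²(0,∞) (the Carleman part converges absolutely by Hilbert's inequality ∫∫ |f(s)||f(t)|/(t+s) ds dt ≤ π‖f‖²). Then N_-(Q_C) = N_-(Q_h). In particular, Q_C(f) ≥ 0 for all f ∈ L²(0,∞) if and only if Q_h(f) ≥ 0 for all f ∈ L²(0,∞). -/
open MeasureTheory Complex Polynomial

noncomputable section

lemma wt_facts (s : ℝ) (hs : 0 < s) :
    Integrable (fun t : ℝ => √(s / t) / (s + t)) halfLineMeasure ∧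
    ∫ t, √(s / t) / (s + t) ∂halfLineMeasure = Real.pi := by
  have hcont : ContinuousWithinAt (fun t : ℝ => 2 * Real.arctan (√(t / s))) (Set.Ici 0) 0 := by
    apply Continuous.continuousWithinAt
    fun_prop
  have hder : ∀ t ∈ Set.Ioi (0:ℝ), HasDerivAt (fun t : ℝ => 2 * Real.arctan (√(t / s)))
      (√(s / t) / (s + t)) t := by
    intro t ht
    have ht : 0 < t := ht
    have h1 : HasDerivAt (fun t : ℝ => t / s) (1 / s) t := (hasDerivAt_id t).div_const s
    have h2 := ((h1.sqrt (by positivity)).arctan).const_mul 2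
    refine h2.congr_deriv ?_
    symm
    rw [Real.sqrt_div hs.le, Real.sqrt_div ht.le, div_pow, Real.sq_sqrt ht.le, Real.sq_sqrt hs.le]
    have a : 0 < √s := Real.sqrt_pos.2 hs
    have b : 0 < √t := Real.sqrt_pos.2 ht
    field_simp
  have hpos : ∀ t ∈ Set.Ioi (0:ℝ), 0 ≤ √(s / t) / (s + t) := by
    intro t ht
    have ht : 0 < t := ht
    positivity
  have hlim : Filter.Tendsto (fun t : ℝ => 2 * Real.arctan (√(t / s))) Filter.atTop
      (nhds (2 * (Real.pi / 2))) := by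
    apply Filter.Tendsto.const_mul
    have : Filter.Tendsto (fun t : ℝ => √(t / s)) Filter.atTop Filter.atTop :=
      Real.tendsto_sqrt_atTop.comp (Filter.tendsto_id.atTop_div_const hs)
    exact (tendsto_nhds_of_tendsto_nhdsWithin Real.tendsto_arctan_atTop).comp this
  refine ⟨integrableOn_Ioi_deriv_of_nonneg hcont hder hpos hlim, ?_⟩
  rw [integral_Ioi_of_hasDerivAt_of_nonneg hcont hder hpos hlim]
  simp
  ring

lemma ae_pos : ∀ᵐ t ∂halfLineMeasure, 0 < t := ae_restrict_mem measurableSet_Ioi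

lemma ae_pos2 : ∀ᵐ p ∂(halfLineMeasure.prod halfLineMeasure), 0 < p.1 ∧ 0 < p.2 := by
  rw [Measure.prod_restrict]
  exact ae_restrict_mem (measurableSet_Ioi.prod measurableSet_Ioi)

lemma wt_int (f : ℝ → ℂ) (hf : MemLp f 2 halfLineMeasure) :
    Integrable (fun p : ℝ × ℝ => ‖f p.2‖ ^ 2 * (√(p.2 / p.1) / (p.2 + p.1)))
      (halfLineMeasure.prod halfLineMeasure) := by
  have hsq : Integrable (fun s => ‖f s‖ ^ 2) halfLineMeasure := hf.integrable_norm_pow (by norm_num)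
  have hm : AEStronglyMeasurable (fun p : ℝ × ℝ => ‖f p.2‖ ^ 2 * (√(p.2 / p.1) / (p.2 + p.1)))
      (halfLineMeasure.prod halfLineMeasure) := by
    apply AEStronglyMeasurable.mul
    · exact hsq.1.comp_snd
    · apply Measurable.aestronglyMeasurable
      fun_prop
  rw [integrable_prod_iff' hm]
  constructor
  · filter_upwards [ae_pos] with s hs
    exact (wt_facts s hs).1.const_mul _
  · refine (hsq.mul_const Real.pi).congr ?_
    filter_upwards [ae_pos] with s hs
    rw [← (wt_facts s hs).2, ← integral_const_mul]
    apply integral_congr_ae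
    filter_upwards [ae_pos] with t ht
    rw [Real.norm_of_nonneg (by positivity)]

lemma hilbert_int (f g : ℝ → ℂ) (hf : MemLp f 2 halfLineMeasure) (hg : MemLp g 2 halfLineMeasure) :
    Integrable (fun p : ℝ × ℝ => ‖f p.2‖ * ‖g p.1‖ / (p.1 + p.2))
      (halfLineMeasure.prod halfLineMeasure) := by
  have h1 := wt_int f hf
  have h2 := (wt_int g hg).swap
  refine (h1.add h2).mono' ?_ ?_
  · apply AEStronglyMeasurable.div₀
    · exact hf.1.norm.comp_snd.mul hg.1.norm.comp_fst
    · apply Measurable.aestronglyMeasurable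
      fun_prop
  · filter_upwards [ae_pos2] with p hp
    obtain ⟨a, b⟩ := hp
    rw [Real.norm_of_nonneg (by positivity)]
    simp only [Pi.add_apply, Function.comp, Prod.fst_swap, Prod.snd_swap]
    rw [add_comm p.2 p.1, ← mul_div_assoc, ← mul_div_assoc, ← add_div]
    gcongr
    have hx : √(p.2 / p.1) * √(p.1 / p.2) = 1 := by
      rw [← Real.sqrt_mul (by positivity)]
      rw [show p.2 / p.1 * (p.1 / p.2) = 1 by field_simp]
      simp
    set x := √(p.2 / p.1)
    set y := √(p.1 / p.2)
    have x0 : 0 < x := Real.sqrt_pos.2 (by positivity)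
    have y0 : 0 < y := Real.sqrt_pos.2 (by positivity)
    have hy : y = 1 / x := by field_simp; linarith
    rw [hy]
    have : ‖f p.2‖ ^ 2 * x + ‖g p.1‖ ^ 2 * (1 / x) - ‖f p.2‖ * ‖g p.1‖
      = ((‖f p.2‖ * x - ‖g p.1‖) ^ 2 + ‖f p.2‖ * ‖g p.1‖ * x) / x := by
      field_simp; ring
    have h3 : 0 ≤ ((‖f p.2‖ * x - ‖g p.1‖) ^ 2 + ‖f p.2‖ * ‖g p.1‖ * x) / x := by positivity
    linarith

/-- Good kernels. -/
def GoodK (k : ℝ → ℂ) : Prop := Measurable k ∧ ∃ C : ℝ, ∀ u > 0, ‖k u‖ ≤ C / u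

/-- Sesquilinear form on functions. -/
def sesq (k : ℝ → ℂ) (f g : ℝ → ℂ) : ℂ :=
  ∫ p : ℝ × ℝ, k (p.1 + p.2) * f p.2 * starRingEnd ℂ (g p.1) ∂(halfLineMeasure.prod halfLineMeasure)

lemma GoodK.integrable {k : ℝ → ℂ} (hk : GoodK k) {f g : ℝ → ℂ} (hf : MemLp f 2 halfLineMeasure)
    (hg : MemLp g 2 halfLineMeasure) :
    Integrable (fun p : ℝ × ℝ => k (p.1 + p.2) * f p.2 * starRingEnd ℂ (g p.1))
      (halfLineMeasure.prod halfLineMeasure) := by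
  obtain ⟨hm, C, hC⟩ := hk
  refine ((hilbert_int f g hf hg).const_mul C).mono' ?_ ?_
  · refine AEStronglyMeasurable.mul (AEStronglyMeasurable.mul ?_ hf.1.comp_snd) ?_
    · apply Measurable.aestronglyMeasurable
      fun_prop
    · exact (Complex.continuous_conj.comp_aestronglyMeasurable hg.1).comp_fst
  · filter_upwards [ae_pos2] with p hp
    obtain ⟨a, b⟩ := hp
    rw [norm_mul, norm_mul, RCLike.norm_conj]
    have := hC (p.1 + p.2) (by positivity)
    calc _ ≤ C / (p.1 + p.2) * ‖f p.2‖ * ‖g p.1‖ := by gcongr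
      _ = _ := by ring

lemma GoodK.add {k l : ℝ → ℂ} (hk : GoodK k) (hl : GoodK l) : GoodK (fun u => k u + l u) := by
  obtain ⟨hm, C, hC⟩ := hk
  obtain ⟨hm', C', hC'⟩ := hl
  refine ⟨hm.add hm', C + C', fun u hu => ?_⟩
  rw [add_div]
  exact (norm_add_le _ _).trans (add_le_add (hC u hu) (hC' u hu))

lemma goodK_inv : GoodK (fun u : ℝ => (u : ℂ)⁻¹) := by
  refine ⟨by fun_prop, 1, fun u hu => ?_⟩
  simp [abs_of_pos hu]

lemma sesq_add_kernel {k l : ℝ → ℂ} (hk : GoodK k) (hl : GoodK l) {f g : ℝ → ℂ}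
    (hf : MemLp f 2 halfLineMeasure) (hg : MemLp g 2 halfLineMeasure) :
    sesq (fun u => k u + l u) f g = sesq k f g + sesq l f g := by
  unfold sesq
  rw [← integral_add (hk.integrable hf hg) (hl.integrable hf hg)]
  congr 1; ext p; ring

lemma sesq_sub_left {k : ℝ → ℂ} (hk : GoodK k) {f f' g : ℝ → ℂ}
    (hf : MemLp f 2 halfLineMeasure) (hf' : MemLp f' 2 halfLineMeasure)
    (hg : MemLp g 2 halfLineMeasure) :
    sesq k (f - f') g = sesq k f g - sesq k f' g := by
  unfold sesq
  rw [← integral_sub (hk.integrable hf hg) (hk.integrable hf' hg)]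
  congr 1; ext p; simp only [Pi.sub_apply]; ring

lemma sesq_sub_right {k : ℝ → ℂ} (hk : GoodK k) {f g g' : ℝ → ℂ}
    (hf : MemLp f 2 halfLineMeasure) (hg : MemLp g 2 halfLineMeasure)
    (hg' : MemLp g' 2 halfLineMeasure) :
    sesq k f (g - g') = sesq k f g - sesq k f g' := by
  unfold sesq
  rw [← integral_sub (hk.integrable hf hg) (hk.integrable hf hg')]
  congr 1; ext p; simp only [Pi.sub_apply, map_sub]; ring

lemma sesq_sum {k : ℝ → ℂ} (hk : GoodK k) {d : ℕ} (φ : Fin d → ℝ → ℂ)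
    (hφ : ∀ i, MemLp (φ i) 2 halfLineMeasure) (c : Fin d → ℂ) :
    sesq k (∑ i, c i • φ i) (∑ i, c i • φ i) =
      ∑ i, ∑ j, c i * starRingEnd ℂ (c j) * sesq k (φ i) (φ j) := by
  unfold sesq
  simp_rw [← integral_const_mul]
  have hI := fun i j => (hk.integrable (hφ i) (hφ j)).const_mul (c i * starRingEnd ℂ (c j))
  simp_rw [← integral_finsetSum _ (fun j _ => hI _ j)]
  rw [← integral_finsetSum _ (fun i _ => integrable_finsetSum _ (fun j _ => hI i j))]
  congr 1; ext p
  simp only [Finset.sum_apply, Pi.smul_apply, smul_eq_mul, map_sum, map_mul]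
  rw [mul_assoc, Finset.sum_mul_sum, Finset.mul_sum]
  refine Finset.sum_congr rfl fun i _ => ?_
  rw [Finset.mul_sum]
  refine Finset.sum_congr rfl fun j _ => ?_
  ring

lemma hankelForm_eq {k : ℝ → ℂ} (hk : GoodK k) (F : Lp ℂ 2 halfLineMeasure) {f : ℝ → ℂ}
    (h : (F : ℝ → ℂ) =ᵐ[halfLineMeasure] f) : hankelForm k F = (sesq k f f).re := by
  have hf : MemLp f 2 halfLineMeasure := (memLp_congr_ae h).1 (Lp.memLp F)
  unfold hankelForm sesq
  rw [integral_prod _ (hk.integrable hf hf)]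
  congr 1
  apply integral_congr_ae
  filter_upwards [h] with t ht
  apply integral_congr_ae
  filter_upwards [h] with s hs
  simp only [ht, hs]

/-- Laplace transform. -/
def lap (f : ℝ → ℂ) (x : ℝ) : ℂ := ∫ t, ((Real.exp (-(x * t)) : ℝ) : ℂ) * f t ∂halfLineMeasure

lemma lap_int (f : ℝ → ℂ) (hf : MemLp f 2 halfLineMeasure) :
    Integrable (fun q : ℝ × (ℝ × ℝ) => (((Real.exp (-(q.1 * q.2.2)) : ℝ) : ℂ) * f q.2.2) *
      starRingEnd ℂ (((Real.exp (-(q.1 * q.2.1)) : ℝ) : ℂ) * f q.2.1))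
      (halfLineMeasure.prod (halfLineMeasure.prod halfLineMeasure)) := by
  have hm : AEStronglyMeasurable (fun q : ℝ × (ℝ × ℝ) =>
      (((Real.exp (-(q.1 * q.2.2)) : ℝ) : ℂ) * f q.2.2) *
      starRingEnd ℂ (((Real.exp (-(q.1 * q.2.1)) : ℝ) : ℂ) * f q.2.1))
      (halfLineMeasure.prod (halfLineMeasure.prod halfLineMeasure)) := by
    have h1 : AEStronglyMeasurable (fun q : ℝ × (ℝ × ℝ) => f q.2.2)
      (halfLineMeasure.prod (halfLineMeasure.prod halfLineMeasure)) :=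
      hf.1.comp_snd.comp_snd
    have h2 : AEStronglyMeasurable (fun q : ℝ × (ℝ × ℝ) => f q.2.1)
      (halfLineMeasure.prod (halfLineMeasure.prod halfLineMeasure)) :=
      hf.1.comp_fst.comp_snd
    refine AEStronglyMeasurable.mul (AEStronglyMeasurable.mul ?_ h1)
      (Complex.continuous_conj.comp_aestronglyMeasurable (AEStronglyMeasurable.mul ?_ h2))
    · apply Continuous.aestronglyMeasurable
      fun_prop
    · apply Continuous.aestronglyMeasurable
      fun_prop
  rw [integrable_prod_iff' hm]
  have key : ∀ (x : ℝ) (p : ℝ × ℝ), ‖(((Real.exp (-(x * p.2)) : ℝ) : ℂ) * f p.2) *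
      starRingEnd ℂ (((Real.exp (-(x * p.1)) : ℝ) : ℂ) * f p.1)‖
      = (‖f p.2‖ * ‖f p.1‖) * Real.exp (-(p.1 + p.2) * x) := by
    intro x p
    rw [norm_mul, RCLike.norm_conj, norm_mul, norm_mul, Complex.norm_real, Complex.norm_real,
      Real.norm_of_nonneg (Real.exp_pos _).le, Real.norm_of_nonneg (Real.exp_pos _).le,
      show -(p.1 + p.2) * x = -(x * p.2) + -(x * p.1) by ring, Real.exp_add]
    ring
  constructor
  · filter_upwards [ae_pos2] with p hp
    obtain ⟨a, b⟩ := hp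
    refine (((integrableOn_exp_mul_Ioi (a := -(p.1 + p.2)) (by linarith) 0).integrable).const_mul
      (‖f p.2‖ * ‖f p.1‖)).mono' ?_ ?_
    · apply AEStronglyMeasurable.mul
      · apply Continuous.aestronglyMeasurable
        fun_prop
      · apply Continuous.aestronglyMeasurable
        fun_prop
    · exact Filter.Eventually.of_forall fun x => (key x p).le
  · refine (hilbert_int f f hf hf).congr ?_
    filter_upwards [ae_pos2] with p hp
    obtain ⟨a, b⟩ := hp
    simp_rw [key]
    rw [integral_const_mul, integral_exp_mul_Ioi (by linarith)]
    rw [mul_zero, Real.exp_zero, neg_div_neg_eq]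
    ring

lemma lap_prod (f : ℝ → ℂ) (x : ℝ) :
    ∫ p : ℝ × ℝ, (((Real.exp (-(x * p.2)) : ℝ) : ℂ) * f p.2) *
      starRingEnd ℂ (((Real.exp (-(x * p.1)) : ℝ) : ℂ) * f p.1)
      ∂(halfLineMeasure.prod halfLineMeasure) = ((‖lap f x‖ ^ 2 : ℝ) : ℂ) := by
  have := integral_prod_mul (μ := halfLineMeasure) (ν := halfLineMeasure)
    (fun t => starRingEnd ℂ (((Real.exp (-(x * t)) : ℝ) : ℂ) * f t))
    (fun s => ((Real.exp (-(x * s)) : ℝ) : ℂ) * f s)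
  rw [integral_conj] at this
  simp_rw [mul_comm (_ * f _) (starRingEnd ℂ _)]
  rw [this]
  change starRingEnd ℂ (lap f x) * lap f x = _
  rw [mul_comm, Complex.mul_conj, Complex.normSq_eq_norm_sq]

lemma lap_sq_int (f : ℝ → ℂ) (hf : MemLp f 2 halfLineMeasure) :
    Integrable (fun x => ‖lap f x‖ ^ 2) halfLineMeasure := by
  have := (lap_int f hf).integral_prod_left
  simp_rw [lap_prod] at this
  simpa using this.norm

lemma carleman_eq (f : ℝ → ℂ) (hf : MemLp f 2 halfLineMeasure) :
    sesq (fun u : ℝ => (u : ℂ)⁻¹) f f = ((∫ x, ‖lap f x‖ ^ 2 ∂halfLineMeasure : ℝ) : ℂ) := by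
  rw [← integral_complex_ofReal]
  simp_rw [← lap_prod]
  rw [integral_integral_swap (lap_int f hf)]
  unfold sesq
  apply integral_congr_ae
  filter_upwards [ae_pos2] with p hp
  obtain ⟨a, b⟩ := hp
  have : ∀ x : ℝ, (((Real.exp (-(x * p.2)) : ℝ) : ℂ) * f p.2) *
      starRingEnd ℂ (((Real.exp (-(x * p.1)) : ℝ) : ℂ) * f p.1)
      = ((Real.exp (-(p.1 + p.2) * x) : ℝ) : ℂ) * (f p.2 * starRingEnd ℂ (f p.1)) := by
    intro x
    rw [show -(p.1 + p.2) * x = -(x * p.2) + -(x * p.1) by ring, Real.exp_add, map_mul,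
      Complex.conj_ofReal]
    push_cast; ring
  simp_rw [this]
  rw [integral_mul_const, integral_complex_ofReal, integral_exp_mul_Ioi (by linarith)]
  rw [mul_zero, Real.exp_zero, neg_div_neg_eq, one_div, mul_assoc]
  push_cast; rfl

lemma exp_pow_bound (a : ℝ) (ha : 0 < a) (k : ℕ) (u : ℝ) (hu : 0 < u) :
    u ^ k * Real.exp (-(a * u)) ≤ k.factorial / a ^ k := by
  have h := Real.pow_div_factorial_le_exp (x := a * u) (by positivity) k
  rw [Real.exp_neg, ← div_eq_mul_inv, div_le_div_iff₀ (Real.exp_pos _) (by positivity)]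
  rw [div_le_iff₀ (by positivity), mul_pow] at h
  linarith

lemma expPoly_bound (α : ℂ) (hα : 0 < α.re) (P : ℂ[X]) :
    ∃ C : ℝ, ∀ u : ℝ, 0 < u → ‖P.eval (u : ℂ) * Complex.exp (-α * u)‖ ≤
      C * Real.exp (-(α.re / 2 * u)) := by
  induction P using Polynomial.induction_on' with
  | add p q hp hq =>
    obtain ⟨C, hC⟩ := hp
    obtain ⟨D, hD⟩ := hq
    refine ⟨C + D, fun u hu => ?_⟩
    rw [eval_add, add_mul, add_mul]
    exact (norm_add_le _ _).trans (add_le_add (hC u hu) (hD u hu))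
  | monomial n a =>
    refine ⟨‖a‖ * (n.factorial / (α.re / 2) ^ n), fun u hu => ?_⟩
    have h := exp_pow_bound (α.re / 2) (by positivity) n u hu
    rw [eval_monomial, norm_mul, norm_mul, norm_pow, Complex.norm_real, Real.norm_of_nonneg hu.le,
      Complex.norm_exp]
    have : (-α * (u : ℂ)).re = -(α.re / 2 * u) + -(α.re / 2 * u) := by
      simp; ring
    rw [this, Real.exp_add]
    calc _ = ‖a‖ * (u ^ n * Real.exp (-(α.re / 2 * u))) * Real.exp (-(α.re / 2 * u)) := by ring
      _ ≤ _ := by gcongr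

lemma expPoly_meas (α : ℂ) (P : ℂ[X]) :
    Continuous (fun u : ℝ => P.eval (u : ℂ) * Complex.exp (-α * u)) := by
  have := P.continuous
  fun_prop

lemma exp_memLp (a : ℝ) (ha : 0 < a) :
    MemLp (fun u : ℝ => Real.exp (-(a * u))) 2 halfLineMeasure := by
  rw [memLp_two_iff_integrable_sq (by apply Continuous.aestronglyMeasurable; fun_prop)]
  refine (integrableOn_exp_mul_Ioi (a := -(2 * a)) (by linarith) 0).integrable.congr ?_
  refine Filter.Eventually.of_forall fun u => ?_
  simp only
  rw [← Real.exp_nat_mul]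
  congr 1; push_cast; ring

lemma expPoly_memLp (α : ℂ) (hα : 0 < α.re) (P : ℂ[X]) :
    MemLp (fun u : ℝ => P.eval (u : ℂ) * Complex.exp (-α * u)) 2 halfLineMeasure := by
  obtain ⟨C, hC⟩ := expPoly_bound α hα P
  refine ((exp_memLp (α.re / 2) (by positivity)).const_mul C).mono'
    (expPoly_meas α P).aestronglyMeasurable ?_
  filter_upwards [ae_pos] with u hu
  exact hC u hu

lemma expPoly_int (α : ℂ) (hα : 0 < α.re) (P : ℂ[X]) {f : ℝ → ℂ} (hf : MemLp f 2 halfLineMeasure) :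
    Integrable (fun u : ℝ => P.eval (u : ℂ) * Complex.exp (-α * u) * f u) halfLineMeasure :=
  (expPoly_memLp α hα P).integrable_mul hf

lemma goodK_expPoly (α : ℂ) (hα : 0 < α.re) (P : ℂ[X]) :
    GoodK (fun u : ℝ => P.eval (u : ℂ) * Complex.exp (-α * u)) := by
  obtain ⟨C, hC⟩ := expPoly_bound α hα P
  refine ⟨(expPoly_meas α P).measurable, C * (1 / (α.re / 2)), fun u hu => (hC u hu).trans ?_⟩
  have hC0 : 0 ≤ C := by
    have := (norm_nonneg _).trans (hC 1 one_pos)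
    exact nonneg_of_mul_nonneg_left this (Real.exp_pos _)
  have := exp_pow_bound (α.re / 2) (by positivity) 1 u hu
  rw [mul_div_assoc]
  gcongr
  rw [le_div_iff₀ hu]
  simpa [mul_comm] using this

lemma goodK_sum (s : Finset ℕ) (k : ℕ → ℝ → ℂ) (h : ∀ m ∈ s, GoodK (k m)) :
    GoodK (fun u => ∑ m ∈ s, k m u) := by
  induction s using Finset.induction_on with
  | empty => exact ⟨by simp [measurable_const], 0, by simp⟩
  | insert a s ha ih =>
    simp_rw [Finset.sum_insert ha]
    exact (h a (by simp)).add (ih fun m hm => h m (by simp [hm]))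

/-- Right shift by one. -/
def shiftR : Module.End ℂ (ℝ → ℂ) where
  toFun f := (Set.Ioi (1:ℝ)).indicator (fun t => f (t - 1))
  map_add' f g := by
    ext t; by_cases h : 1 < t <;> simp [Set.indicator, h]
  map_smul' c f := by
    ext t; by_cases h : 1 < t <;> simp [Set.indicator, h]

lemma mp_sub : MeasurePreserving (fun t : ℝ => t - 1) (volume.restrict (Set.Ioi 1))
    halfLineMeasure := by
  have := (measurePreserving_sub_right (volume : Measure ℝ) (1:ℝ)).restrict_preimage
    (s := Set.Ioi 0) measurableSet_Ioi
  have e : (fun t : ℝ => t - 1) ⁻¹' Set.Ioi 0 = Set.Ioi 1 := by ext; simp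
  rwa [e] at this

lemma shiftR_memLp {f : ℝ → ℂ} (hf : MemLp f 2 halfLineMeasure) :
    MemLp (shiftR f) 2 halfLineMeasure := by
  change MemLp ((Set.Ioi (1:ℝ)).indicator (fun t => f (t - 1))) 2 halfLineMeasure
  rw [memLp_indicator_iff_restrict measurableSet_Ioi, Measure.restrict_restrict measurableSet_Ioi,
    Set.Ioi_inter_Ioi]
  simp only [zero_le_one, sup_of_le_left]
  exact hf.comp_measurePreserving mp_sub

lemma integral_shiftR (u f : ℝ → ℂ) :
    ∫ t, u t * shiftR f t ∂halfLineMeasure = ∫ t, u (t + 1) * f t ∂halfLineMeasure := by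
  have h1 : ∀ t, u t * shiftR f t = (Set.Ioi (1:ℝ)).indicator
      (fun t => u (t - 1 + 1) * f (t - 1)) t := by
    intro t
    change u t * (Set.Ioi (1:ℝ)).indicator (fun t => f (t - 1)) t = _
    by_cases h : 1 < t <;> simp [Set.indicator, h]
  simp_rw [h1]
  rw [integral_indicator measurableSet_Ioi, Measure.restrict_restrict measurableSet_Ioi,
    Set.Ioi_inter_Ioi]
  simp only [zero_le_one, sup_of_le_left]
  exact mp_sub.integral_comp (MeasurableEquiv.subRight (1:ℝ)).measurableEmbedding
    (fun t => u (t + 1) * f t)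

lemma aeval_memLp (b : ℂ[X]) {f : ℝ → ℂ} (hf : MemLp f 2 halfLineMeasure) :
    MemLp (aeval shiftR b f) 2 halfLineMeasure := by
  induction b using Polynomial.induction_on' with
  | add p q hp hq =>
    rw [map_add]
    exact hp.add hq
  | monomial n a =>
    rw [aeval_monomial]
    have : MemLp ((shiftR ^ n) f) 2 halfLineMeasure := by
      induction n with
      | zero => simpa using hf
      | succ n ih =>
        rw [pow_succ', Module.End.mul_apply]
        exact shiftR_memLp ih
    have := this.const_smul a
    simpa [Module.algebraMap_end_apply] using this

lemma lap_integrable {f : ℝ → ℂ} (hf : MemLp f 2 halfLineMeasure) {x : ℝ} (hx : 0 < x) :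
    Integrable (fun t : ℝ => ((Real.exp (-(x * t)) : ℝ) : ℂ) * f t) halfLineMeasure :=
  ((exp_memLp x hx).ofReal (K := ℂ)).integrable_mul hf

lemma lap_add {f g : ℝ → ℂ} (hf : MemLp f 2 halfLineMeasure) (hg : MemLp g 2 halfLineMeasure)
    {x : ℝ} (hx : 0 < x) : lap (f + g) x = lap f x + lap g x := by
  unfold lap
  rw [← integral_add (lap_integrable hf hx) (lap_integrable hg hx)]
  congr 1; ext t; simp only [Pi.add_apply]; ring

lemma lap_smul (c : ℂ) (f : ℝ → ℂ) (x : ℝ) : lap (c • f) x = c * lap f x := by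
  unfold lap
  rw [← integral_const_mul]
  congr 1; ext t; simp only [Pi.smul_apply, smul_eq_mul]; ring

lemma lap_sum {d : ℕ} (φ : Fin d → ℝ → ℂ)
    (hφ : ∀ i, MemLp (φ i) 2 halfLineMeasure) (c : Fin d → ℂ) {x : ℝ} (hx : 0 < x) :
    lap (∑ i, c i • φ i) x = ∑ i, c i * lap (φ i) x := by
  unfold lap
  simp_rw [← integral_const_mul]
  rw [← integral_finsetSum _ (fun i _ => (lap_integrable (hφ i) hx).const_mul _)]
  congr 1; ext t
  simp only [Finset.sum_apply, Pi.smul_apply, smul_eq_mul, Finset.mul_sum]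
  refine Finset.sum_congr rfl fun i _ => ?_
  ring

lemma lap_shiftR (f : ℝ → ℂ) (x : ℝ) : lap (shiftR f) x = (Real.exp (-x) : ℝ) * lap f x := by
  unfold lap
  rw [integral_shiftR, ← integral_const_mul]
  congr 1; ext t
  rw [show -(x * (t + 1)) = -x + -(x * t) by ring, Real.exp_add]
  push_cast; ring

lemma lap_aeval (b : ℂ[X]) {f : ℝ → ℂ} (hf : MemLp f 2 halfLineMeasure) {x : ℝ} (hx : 0 < x) :
    lap (aeval shiftR b f) x = b.eval ((Real.exp (-x) : ℝ) : ℂ) * lap f x := by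
  induction b using Polynomial.induction_on' with
  | add p q hp hq =>
    rw [map_add, LinearMap.add_apply, lap_add (aeval_memLp p hf) (aeval_memLp q hf) hx, hp, hq,
      eval_add, add_mul]
  | monomial n a =>
    rw [aeval_monomial, Module.End.mul_apply, Module.algebraMap_end_apply, lap_smul, eval_monomial,
      mul_assoc]
    congr 1
    induction n with
    | zero => simp
    | succ n ih =>
      rw [pow_succ', Module.End.mul_apply, lap_shiftR, ih]
      ring

lemma annih_pow (α : ℂ) (hα : 0 < α.re) (N : ℕ) (P : ℂ[X]) (hP : P.degree < N)
    {f : ℝ → ℂ} (hf : MemLp f 2 halfLineMeasure) :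
    ∫ t : ℝ, P.eval (t : ℂ) * Complex.exp (-α * t) *
      aeval shiftR ((X - C (Complex.exp (-α))) ^ N) f t ∂halfLineMeasure = 0 := by
  induction N generalizing P with
  | zero =>
    have : P = 0 := by
      rw [← degree_eq_bot]
      exact Nat.WithBot.lt_zero_iff.1 (by simpa using hP)
    simp [this]
  | succ N ih =>
    rw [pow_succ', map_mul, Module.End.mul_apply]
    set g := aeval shiftR ((X - C (Complex.exp (-α))) ^ N) f with hg
    have hgm : MemLp g 2 halfLineMeasure := aeval_memLp _ hf
    have e1 : aeval shiftR (X - C (Complex.exp (-α))) g = shiftR g - Complex.exp (-α) • g := by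
      rw [map_sub, aeval_X, aeval_C, LinearMap.sub_apply, Module.algebraMap_end_apply]
    rw [e1]
    have i1 := expPoly_int α hα P (shiftR_memLp hgm)
    have i2 := (expPoly_int α hα P hgm).const_mul (Complex.exp (-α))
    have i3 := (expPoly_int α hα (taylor 1 P) hgm).const_mul (Complex.exp (-α))
    have e2 : ∀ t : ℝ, P.eval (t : ℂ) * Complex.exp (-α * t) *
        (shiftR g - Complex.exp (-α) • g) t = P.eval (t : ℂ) * Complex.exp (-α * t) * shiftR g t
        - Complex.exp (-α) * (P.eval (t : ℂ) * Complex.exp (-α * t) * g t) := by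
      intro t; simp only [Pi.sub_apply, Pi.smul_apply, smul_eq_mul]; ring
    simp_rw [e2]
    rw [integral_sub i1 i2, integral_shiftR (fun t : ℝ => P.eval (t : ℂ) * Complex.exp (-α * t)) g]
    have e3 : ∀ t : ℝ, P.eval ((t + 1 : ℝ) : ℂ) * Complex.exp (-α * (t + 1 : ℝ)) * g t
        = Complex.exp (-α) * ((taylor 1 P).eval (t : ℂ) * Complex.exp (-α * t) * g t) := by
      intro t
      rw [taylor_eval]
      push_cast
      rw [mul_add, Complex.exp_add, mul_one]
      ring
    simp_rw [e3]
    rw [← integral_sub i3 i2]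
    have e4 : ∀ t : ℝ, Complex.exp (-α) * ((taylor 1 P).eval (t : ℂ) * Complex.exp (-α * t) * g t)
      - Complex.exp (-α) * (P.eval (t : ℂ) * Complex.exp (-α * t) * g t)
      = Complex.exp (-α) * ((taylor 1 P - P).eval (t : ℂ) * Complex.exp (-α * t) * g t) := by
      intro t; rw [eval_sub]; ring
    simp_rw [e4]
    rw [integral_const_mul, ih, mul_zero]
    by_cases h0 : P = 0
    · simp [h0]
    have hlt : (taylor 1 P - P).degree < P.degree := by
      have := degree_sub_lt_left (degree_taylor P 1) (by simpa using h0) (leadingCoeff_taylor 1 P)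
      rwa [degree_taylor] at this
    rw [degree_eq_natDegree h0] at hlt hP
    have : P.natDegree ≤ N := by
      have : P.natDegree < N + 1 := by exact_mod_cast hP
      omega
    exact hlt.trans_le (by exact_mod_cast this)

lemma annih (α : ℂ) (hα : 0 < α.re) (N : ℕ) (P : ℂ[X]) (hP : P.natDegree < N) (b : ℂ[X])
    (hb : (X - C (Complex.exp (-α))) ^ N ∣ b)
    {f : ℝ → ℂ} (hf : MemLp f 2 halfLineMeasure) (s : ℝ) :
    ∫ t : ℝ, P.eval ((t + s : ℝ) : ℂ) * Complex.exp (-α * (t + s : ℝ)) *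
      aeval shiftR b f t ∂halfLineMeasure = 0 := by
  obtain ⟨r, rfl⟩ := hb
  have h := annih_pow α hα N (taylor (s : ℂ) P)
    (by rw [degree_taylor]; exact degree_le_natDegree.trans_lt (by exact_mod_cast hP))
    (aeval_memLp r hf)
  rw [map_mul, Module.End.mul_apply]
  rw [← mul_zero (Complex.exp (-α * s)), ← h, ← integral_const_mul]
  congr 1; ext t
  rw [taylor_eval]
  push_cast
  rw [mul_add, Complex.exp_add]
  ring

lemma annih_integrable (α : ℂ) (hα : 0 < α.re) (P : ℂ[X]) {f : ℝ → ℂ}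
    (hf : MemLp f 2 halfLineMeasure) (s : ℝ) :
    Integrable (fun t : ℝ => P.eval ((t + s : ℝ) : ℂ) * Complex.exp (-α * (t + s : ℝ)) * f t)
      halfLineMeasure := by
  refine ((expPoly_int α hα (taylor (s : ℂ) P) hf).const_mul (Complex.exp (-α * s))).congr
    (Filter.Eventually.of_forall fun t => ?_)
  simp only
  rw [taylor_eval]
  push_cast
  rw [mul_add, Complex.exp_add]
  ring

lemma goodK_fr (M : ℕ) (α : ℕ → ℂ) (P : ℕ → ℂ[X]) (hre : ∀ m ∈ Finset.Icc 1 M, 0 < (α m).re) :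
    GoodK (frKernel M α P) :=
  goodK_sum _ _ fun m hm => goodK_expPoly (α m) (hre m hm) (P m)

lemma annih_fr (M : ℕ) (α : ℕ → ℂ) (P : ℕ → ℂ[X]) (hre : ∀ m ∈ Finset.Icc 1 M, 0 < (α m).re)
    (N : ℕ) (hN : ∀ m ∈ Finset.Icc 1 M, (P m).natDegree < N) (b : ℂ[X])
    (hb : ∀ m ∈ Finset.Icc 1 M, (X - C (Complex.exp (-α m))) ^ N ∣ b)
    {f : ℝ → ℂ} (hf : MemLp f 2 halfLineMeasure) (s : ℝ) :
    ∫ t : ℝ, frKernel M α P (t + s) * aeval shiftR b f t ∂halfLineMeasure = 0 := by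
  unfold frKernel
  simp_rw [Finset.sum_mul]
  rw [integral_finsetSum _ (fun m hm => annih_integrable (α m) (hre m hm) (P m)
    (aeval_memLp b hf) s)]
  exact Finset.sum_eq_zero fun m hm => annih (α m) (hre m hm) N (P m) (hN m hm) b (hb m hm) hf s

lemma conj_fr (M : ℕ) (α : ℕ → ℂ) (P : ℕ → ℂ[X]) (u : ℝ) :
    starRingEnd ℂ (frKernel M α P u) =
      frKernel M (fun m => starRingEnd ℂ (α m)) (fun m => (P m).map (starRingEnd ℂ)) u := by
  unfold frKernel
  rw [map_sum]
  refine Finset.sum_congr rfl fun m _ => ?_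
  rw [map_mul, ← Complex.exp_conj, map_mul, map_neg, Complex.conj_ofReal]
  congr 1
  have := Polynomial.eval_map_apply (starRingEnd ℂ) (p := P m) (u : ℂ)
  rw [Complex.conj_ofReal] at this
  exact this.symm

lemma sesq_left_zero {k : ℝ → ℂ} (hk : GoodK k) {f g : ℝ → ℂ} (hf : MemLp f 2 halfLineMeasure)
    (hg : MemLp g 2 halfLineMeasure) (h : ∀ t, ∫ s, k (s + t) * f s ∂halfLineMeasure = 0) :
    sesq k f g = 0 := by
  unfold sesq
  rw [integral_prod _ (hk.integrable hf hg)]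
  simp_rw [integral_mul_const]
  simp_rw [add_comm _ _] at h ⊢
  simp [h]

lemma sesq_right_zero {k : ℝ → ℂ} (hk : GoodK k) {f g : ℝ → ℂ} (hf : MemLp f 2 halfLineMeasure)
    (hg : MemLp g 2 halfLineMeasure)
    (h : ∀ s, ∫ t, starRingEnd ℂ (k (t + s)) * g t ∂halfLineMeasure = 0) :
    sesq k f g = 0 := by
  unfold sesq
  rw [integral_prod_symm _ (hk.integrable hf hg)]
  have : ∀ s, ∫ t, k (t + s) * f s * starRingEnd ℂ (g t) ∂halfLineMeasure = 0 := by
    intro s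
    have h2 := congrArg (starRingEnd ℂ) (h s)
    rw [← integral_conj, map_zero] at h2
    rw [← mul_zero (f s), ← h2, ← integral_const_mul]
    congr 1; ext t
    rw [map_mul, Complex.conj_conj]
    ring
  simp [this]

/-- Polynomial vanishing at `z` and `conj z`. -/
def qpol (z : ℂ) (n : ℕ) : ℂ[X] :=
  1 - (1 - C (1 / 4) * ((X - C z) * (X - C (starRingEnd ℂ z)))) ^ n

lemma qpol_dvd (z : ℂ) (n : ℕ) : (X - C z) * (X - C (starRingEnd ℂ z)) ∣ qpol z n := by
  have := sub_dvd_pow_sub_pow (1 : ℂ[X])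
    (1 - C (1 / 4) * ((X - C z) * (X - C (starRingEnd ℂ z)))) n
  rw [one_pow, sub_sub_cancel] at this
  exact (Dvd.intro_left _ rfl).trans this

lemma qpol_eval (z : ℂ) (n : ℕ) (x : ℝ) :
    (qpol z n).eval (x : ℂ) = ((1 - (1 - ‖(x : ℂ) - z‖ ^ 2 / 4) ^ n : ℝ) : ℂ) := by
  have : ((x : ℂ) - z) * ((x : ℂ) - starRingEnd ℂ z) = ((‖(x : ℂ) - z‖ ^ 2 : ℝ) : ℂ) := by
    rw [← Complex.normSq_eq_norm_sq, ← Complex.mul_conj, map_sub, Complex.conj_ofReal]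
  simp only [qpol, eval_sub, eval_one, eval_pow, eval_mul, eval_C, eval_X]
  rw [this]
  push_cast
  ring

/-- Approximating polynomial. -/
def bpol (s : Finset ℕ) (z : ℕ → ℂ) (N n : ℕ) : ℂ[X] := ∏ m ∈ s, (qpol (z m) n) ^ N

/-- Its values. -/
def bval (s : Finset ℕ) (z : ℕ → ℂ) (N n : ℕ) (x : ℝ) : ℝ :=
  ∏ m ∈ s, (1 - (1 - ‖(x : ℂ) - z m‖ ^ 2 / 4) ^ n) ^ N

lemma bpol_eval (s : Finset ℕ) (z : ℕ → ℂ) (N n : ℕ) (x : ℝ) :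
    (bpol s z N n).eval (x : ℂ) = (bval s z N n x : ℝ) := by
  unfold bpol bval
  rw [eval_prod]
  push_cast
  refine Finset.prod_congr rfl fun m _ => ?_
  rw [eval_pow, qpol_eval]
  push_cast
  rfl

lemma base_mem {x : ℝ} (hx0 : 0 ≤ x) (hx1 : x ≤ 1) {z : ℂ} (hz : ‖z‖ ≤ 1) :
    0 ≤ 1 - ‖(x : ℂ) - z‖ ^ 2 / 4 ∧ 1 - ‖(x : ℂ) - z‖ ^ 2 / 4 ≤ 1 := by
  have h : ‖(x : ℂ) - z‖ ≤ 2 := by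
    have := norm_sub_le (x : ℂ) z
    rw [Complex.norm_real, Real.norm_of_nonneg hx0] at this
    linarith
  have h0 := norm_nonneg ((x : ℂ) - z)
  constructor
  · nlinarith
  · nlinarith

lemma bval_mem (s : Finset ℕ) (z : ℕ → ℂ) (hz : ∀ m ∈ s, ‖z m‖ ≤ 1) (N n : ℕ) {x : ℝ}
    (hx0 : 0 ≤ x) (hx1 : x ≤ 1) : 0 ≤ bval s z N n x ∧ bval s z N n x ≤ 1 := by
  have h : ∀ m ∈ s, 0 ≤ 1 - (1 - ‖(x : ℂ) - z m‖ ^ 2 / 4) ^ n ∧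
      1 - (1 - ‖(x : ℂ) - z m‖ ^ 2 / 4) ^ n ≤ 1 := by
    intro m hm
    obtain ⟨a, b⟩ := base_mem hx0 hx1 (hz m hm)
    have := pow_le_one₀ (n := n) a b
    have := pow_nonneg a n
    constructor <;> linarith
  constructor
  · exact Finset.prod_nonneg fun m hm => pow_nonneg (h m hm).1 _
  · exact Finset.prod_le_one (fun m hm => pow_nonneg (h m hm).1 _)
      fun m hm => pow_le_one₀ (h m hm).1 (h m hm).2

lemma bval_tendsto (s : Finset ℕ) (z : ℕ → ℂ) (hz : ∀ m ∈ s, ‖z m‖ ≤ 1) (N : ℕ) {x : ℝ}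
    (hx0 : 0 ≤ x) (hx1 : x ≤ 1) (hne : ∀ m ∈ s, (x : ℂ) ≠ z m) :
    Filter.Tendsto (fun n => bval s z N n x) Filter.atTop (nhds 1) := by
  unfold bval
  have : nhds (1 : ℝ) = nhds (∏ m ∈ s, ((1 : ℝ) - 0) ^ N) := by simp
  rw [this]
  refine tendsto_finsetProd _ fun m hm => ?_
  refine Filter.Tendsto.pow (Filter.Tendsto.const_sub (1 : ℝ) ?_) N
  refine tendsto_pow_atTop_nhds_zero_of_lt_one (base_mem hx0 hx1 (hz m hm)).1 ?_
  have : 0 < ‖(x : ℂ) - z m‖ := norm_pos_iff.2 (sub_ne_zero.2 (hne m hm))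
  have : 0 < ‖(x : ℂ) - z m‖ ^ 2 := by positivity
  linarith

lemma ae_ne (s : Finset ℕ) (z : ℕ → ℂ) :
    ∀ᵐ x ∂halfLineMeasure, ∀ m ∈ s, ((Real.exp (-x) : ℝ) : ℂ) ≠ z m := by
  apply ae_restrict_of_ae
  rw [Finset.eventually_all]
  intro m _
  rw [ae_iff]
  refine (Set.Subsingleton.measure_zero ?_ _)
  intro x hx y hy
  simp only [ne_eq, not_not, Set.mem_ofPred_eq] at hx hy
  have := hx.trans hy.symm
  have := Real.exp_injective (Complex.ofReal_injective this)
  linarith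

lemma approx (s : Finset ℕ) (z : ℕ → ℂ) (hz : ∀ m ∈ s, ‖z m‖ ≤ 1) (N : ℕ) (G : ℝ → ℝ)
    (hG : Integrable G halfLineMeasure) :
    Filter.Tendsto (fun n => ∫ x, (1 - bval s z N n (Real.exp (-x))) ^ 2 * G x ∂halfLineMeasure)
      Filter.atTop (nhds 0) := by
  have h0 : (0 : ℝ) = ∫ x : ℝ, (1 - 1) ^ 2 * G x ∂halfLineMeasure := by simp
  rw [h0]
  refine tendsto_integral_of_dominated_convergence (fun x => ‖G x‖) ?_ hG.norm ?_ ?_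
  · intro n
    refine AEStronglyMeasurable.mul ?_ hG.1
    apply Continuous.aestronglyMeasurable
    unfold bval
    fun_prop
  · intro n
    filter_upwards [ae_pos] with x hx
    obtain ⟨a, b⟩ := bval_mem s z hz N n (Real.exp_pos (-x)).le (Real.exp_le_one_iff.2 (by linarith))
    rw [norm_mul, Real.norm_of_nonneg (sq_nonneg _)]
    have : (1 - bval s z N n (Real.exp (-x))) ^ 2 ≤ 1 := by nlinarith
    nlinarith [norm_nonneg (G x)]
  · filter_upwards [ae_pos, ae_ne s z] with x hx hne
    exact (((bval_tendsto s z hz N (Real.exp_pos (-x)).le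
      (Real.exp_le_one_iff.2 (by linarith)) hne).const_sub 1).pow 2).mul_const _

lemma approx_int (s : Finset ℕ) (z : ℕ → ℂ) (hz : ∀ m ∈ s, ‖z m‖ ≤ 1) (N n : ℕ) (G : ℝ → ℝ)
    (hG : Integrable G halfLineMeasure) :
    Integrable (fun x => (1 - bval s z N n (Real.exp (-x))) ^ 2 * G x) halfLineMeasure := by
  refine hG.norm.mono' ?_ ?_
  · refine AEStronglyMeasurable.mul ?_ hG.1
    apply Continuous.aestronglyMeasurable
    unfold bval
    fun_prop
  · filter_upwards [ae_pos] with x hx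
    obtain ⟨a, b⟩ := bval_mem s z hz N n (Real.exp_pos (-x)).le (Real.exp_le_one_iff.2 (by linarith))
    rw [norm_mul, Real.norm_of_nonneg (sq_nonneg _)]
    have : (1 - bval s z N n (Real.exp (-x))) ^ 2 ≤ 1 := by nlinarith
    nlinarith [norm_nonneg (G x)]

/-- The key approximation statement on the level of functions. -/
lemma key_fun (M : ℕ) (α : ℕ → ℂ) (P : ℕ → ℂ[X]) (hre : ∀ m ∈ Finset.Icc 1 M, 0 < (α m).re)
    {d : ℕ} (φ : Fin d → ℝ → ℂ) (hφ : ∀ i, MemLp (φ i) 2 halfLineMeasure) (δ : ℝ) (hδ : 0 < δ) :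
    ∃ ω : Fin d → ℝ → ℂ, (∀ i, MemLp (ω i) 2 halfLineMeasure) ∧ ∀ c : Fin d → ℂ,
      sesq (frKernel M α P) (∑ i, c i • ω i) (∑ i, c i • ω i) =
        sesq (frKernel M α P) (∑ i, c i • φ i) (∑ i, c i • φ i) ∧
      (sesq (fun u : ℝ => (u : ℂ)⁻¹) (∑ i, c i • ω i) (∑ i, c i • ω i)).re ≤
        δ * ∑ i, ‖c i‖ ^ 2 := by
  set s := Finset.Icc 1 M
  set z : ℕ → ℂ := fun m => Complex.exp (-α m) with hzdef
  have hz : ∀ m ∈ s, ‖z m‖ ≤ 1 := by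
    intro m hm
    rw [hzdef, Complex.norm_exp, Real.exp_le_one_iff, Complex.neg_re]
    linarith [hre m hm]
  set N := s.sup (fun m => (P m).natDegree) + 1
  have hN : ∀ m ∈ s, (P m).natDegree < N := fun m hm =>
    Nat.lt_succ_of_le (Finset.le_sup (f := fun m => (P m).natDegree) hm)
  set G : ℝ → ℝ := fun x => ∑ i, ‖lap (φ i) x‖ ^ 2
  have hG : Integrable G halfLineMeasure :=
    integrable_finsetSum _ fun i _ => lap_sq_int (φ i) (hφ i)
  obtain ⟨n, hn⟩ := ((approx s z hz N G hG).eventually (gt_mem_nhds hδ)).exists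
  set b := bpol s z N n with hb
  have hdvd : ∀ m ∈ s, (X - C (z m)) ^ N ∣ b ∧ (X - C (starRingEnd ℂ (z m))) ^ N ∣ b := by
    intro m hm
    have h1 : qpol (z m) n ^ N ∣ b := Finset.dvd_prod_of_mem (fun m => qpol (z m) n ^ N) hm
    have h2 := qpol_dvd (z m) n
    exact ⟨(pow_dvd_pow_of_dvd ((Dvd.intro _ rfl).trans h2) N).trans h1,
      (pow_dvd_pow_of_dvd ((Dvd.intro_left _ rfl).trans h2) N).trans h1⟩
  have hk := goodK_fr M α P hre
  refine ⟨fun i => φ i - aeval shiftR b (φ i), fun i => (hφ i).sub (aeval_memLp b (hφ i)), ?_⟩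
  intro c
  set f := ∑ i, c i • φ i with hf
  have hfm : MemLp f 2 halfLineMeasure := by
    rw [hf]
    exact memLp_finsetSum' _ fun i _ => (hφ i).const_smul (c i)
  have hgm : MemLp (aeval shiftR b f) 2 halfLineMeasure := aeval_memLp b hfm
  have hw : ∑ i, c i • (φ i - aeval shiftR b (φ i)) = f - aeval shiftR b f := by
    rw [hf, map_sum]
    simp_rw [smul_sub, Finset.sum_sub_distrib, map_smul]
  rw [hw]
  constructor
  · have hl : ∀ g, MemLp g 2 halfLineMeasure →
        sesq (frKernel M α P) (aeval shiftR b f) g = 0 := fun g hg =>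
      sesq_left_zero hk hgm hg (annih_fr M α P hre N hN b (fun m hm => (hdvd m hm).1) hfm)
    have hr : sesq (frKernel M α P) f (aeval shiftR b f) = 0 := by
      refine sesq_right_zero hk hfm hgm fun t => ?_
      simp_rw [conj_fr]
      refine annih_fr M _ _ (fun m hm => by simpa using hre m hm) N ?_ b ?_ hfm t
      · intro m hm
        exact natDegree_map_le.trans_lt (hN m hm)
      · intro m hm
        have := (hdvd m hm).2
        simpa only [hzdef, ← Complex.exp_conj, map_neg] using this
    rw [sesq_sub_left hk hfm hgm (hfm.sub hgm), hl _ (hfm.sub hgm), sesq_sub_right hk hfm hfm hgm,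
      hr]
    simp
  · rw [carleman_eq _ (hfm.sub hgm), Complex.ofReal_re]
    have hle : ∫ x, ‖lap (f - aeval shiftR b f) x‖ ^ 2 ∂halfLineMeasure ≤
        ∫ x, (∑ i, ‖c i‖ ^ 2) * ((1 - bval s z N n (Real.exp (-x))) ^ 2 * G x) ∂halfLineMeasure := by
      refine integral_mono_ae (lap_sq_int _ (hfm.sub hgm))
        ((approx_int s z hz N n G hG).const_mul _) ?_
      filter_upwards [ae_pos] with x hx
      have e1 : lap (f - aeval shiftR b f) x =
          ((1 - bval s z N n (Real.exp (-x)) : ℝ) : ℂ) * ∑ i, c i * lap (φ i) x := by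
        have : f - aeval shiftR b f = aeval shiftR (1 - b) f := by
          rw [map_sub, map_one, LinearMap.sub_apply, Module.End.one_apply]
        rw [this, lap_aeval _ hfm hx, hf, lap_sum φ hφ c hx, eval_sub, eval_one, hb, bpol_eval]
        push_cast
        rfl
      rw [e1, norm_mul, mul_pow, Complex.norm_real, Real.norm_eq_abs, sq_abs]
      have e2 : ‖∑ i, c i * lap (φ i) x‖ ^ 2 ≤ (∑ i, ‖c i‖ ^ 2) * G x := by
        have h1 : ‖∑ i, c i * lap (φ i) x‖ ≤ ∑ i, ‖c i‖ * ‖lap (φ i) x‖ := by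
          refine (norm_sum_le _ _).trans (le_of_eq ?_)
          simp_rw [norm_mul]
        exact (pow_le_pow_left₀ (norm_nonneg _) h1 2).trans
          (Finset.sum_mul_sq_le_sq_mul_sq _ _ _)
      calc _ ≤ (1 - bval s z N n (Real.exp (-x))) ^ 2 * ((∑ i, ‖c i‖ ^ 2) * G x) := by gcongr
        _ = _ := by ring
    refine hle.trans ?_
    rw [integral_const_mul, mul_comm]
    gcongr

lemma carleman_nonneg (f : ℝ → ℂ) (hf : MemLp f 2 halfLineMeasure) :
    0 ≤ (sesq (fun u : ℝ => (u : ℂ)⁻¹) f f).re := by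
  rw [carleman_eq f hf, Complex.ofReal_re]
  exact integral_nonneg fun x => by positivity

lemma form_ge (M : ℕ) (α : ℕ → ℂ) (P : ℕ → ℂ[X]) (hre : ∀ m ∈ Finset.Icc 1 M, 0 < (α m).re)
    (F : Lp ℂ 2 halfLineMeasure) : hankelForm (frKernel M α P) F ≤
      hankelForm (fun u : ℝ => (u : ℂ)⁻¹ + frKernel M α P u) F := by
  have hk := goodK_fr M α P hre
  rw [hankelForm_eq hk F (Filter.EventuallyEq.refl _ _),
    hankelForm_eq (goodK_inv.add hk) F (Filter.EventuallyEq.refl _ _),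
    sesq_add_kernel goodK_inv hk (Lp.memLp F) (Lp.memLp F), Complex.add_re]
  linarith [carleman_nonneg F (Lp.memLp F)]

lemma coe_sum_ae {d : ℕ} (e : Fin d → Lp ℂ 2 halfLineMeasure) (φ : Fin d → ℝ → ℂ)
    (h : ∀ i, (e i : ℝ → ℂ) =ᵐ[halfLineMeasure] φ i) (c : Fin d → ℂ) :
    ((∑ i, c i • e i : Lp ℂ 2 halfLineMeasure) : ℝ → ℂ) =ᵐ[halfLineMeasure] ∑ i, c i • φ i := by
  refine (Lp.coeFn_finsetSum _ _).trans ?_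
  have h2 : ∀ᵐ x ∂halfLineMeasure, ∀ i, (c i • e i : Lp ℂ 2 halfLineMeasure) x = (c i • φ i) x := by
    rw [ae_all_iff]
    intro i
    filter_upwards [h i, Lp.coeFn_smul (c i) (e i)] with x h1 h2
    rw [h2, Pi.smul_apply, Pi.smul_apply, h1]
  filter_upwards [h2] with x hx
  simp only [Finset.sum_apply, hx]

lemma key_Lp (M : ℕ) (α : ℕ → ℂ) (P : ℕ → ℂ[X]) (hre : ∀ m ∈ Finset.Icc 1 M, 0 < (α m).re)
    {d : ℕ} (e : Fin d → Lp ℂ 2 halfLineMeasure)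
    (hneg : ∀ c : Fin d → ℂ, c ≠ 0 → hankelForm (frKernel M α P) (∑ i, c i • e i) < 0) :
    ∃ w : Fin d → Lp ℂ 2 halfLineMeasure, ∀ c : Fin d → ℂ, c ≠ 0 →
      hankelForm (fun u : ℝ => (u : ℂ)⁻¹ + frKernel M α P u) (∑ i, c i • w i) < 0 := by
  have hk := goodK_fr M α P hre
  set φ : Fin d → ℝ → ℂ := fun i => e i
  have hφ : ∀ i, MemLp (φ i) 2 halfLineMeasure := fun i => Lp.memLp _
  set q : EuclideanSpace ℂ (Fin d) → ℝ := fun c => hankelForm (frKernel M α P) (∑ i, c i • e i)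
  have hq : ∀ c, q c = (sesq (frKernel M α P) (∑ i, c i • φ i) (∑ i, c i • φ i)).re := fun c =>
    hankelForm_eq hk _ (coe_sum_ae e φ (fun i => Filter.EventuallyEq.refl _ _) c)
  have hqc : Continuous q := by
    have : q = fun c => (∑ i, ∑ j, c i * starRingEnd ℂ (c j) *
        sesq (frKernel M α P) (φ i) (φ j)).re := by
      ext c
      rw [hq, sesq_sum hk φ hφ]
    rw [this]
    apply Complex.continuous_re.comp
    refine continuous_finsetSum _ fun i _ => continuous_finsetSum _ fun j _ => ?_
    have h1 : ∀ i, Continuous (fun c : EuclideanSpace ℂ (Fin d) => c i) := fun i => by fun_prop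
    exact ((h1 i).mul (Complex.continuous_conj.comp (h1 j))).mul continuous_const
  have hhom : ∀ (r : ℝ) (c : EuclideanSpace ℂ (Fin d)), q ((r : ℂ) • c) = r ^ 2 * q c := by
    intro r c
    rw [hq, hq, sesq_sum hk φ hφ, sesq_sum hk φ hφ, ← Complex.re_ofReal_mul, Finset.mul_sum]
    congr 1
    refine Finset.sum_congr rfl fun i _ => ?_
    rw [Finset.mul_sum]
    refine Finset.sum_congr rfl fun j _ => ?_
    simp only [PiLp.smul_apply, smul_eq_mul, map_mul, Complex.conj_ofReal]
    push_cast
    ring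
  have hne : ∀ c : EuclideanSpace ℂ (Fin d), c ≠ 0 → q c < 0 := by
    intro c hc
    apply hneg
    intro h
    apply hc
    ext i
    exact congrFun h i
  obtain ⟨δ, hδ, hδq⟩ : ∃ δ > 0, ∀ c : EuclideanSpace ℂ (Fin d), q c ≤ -δ * ‖c‖ ^ 2 := by
    by_cases hS : (Metric.sphere (0 : EuclideanSpace ℂ (Fin d)) 1).Nonempty
    · obtain ⟨c₀, hc₀, hmax⟩ := (isCompact_sphere (0 : EuclideanSpace ℂ (Fin d)) 1).exists_isMaxOn
        hS hqc.continuousOn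
      have hc0 : c₀ ≠ 0 := by
        rintro rfl
        simp at hc₀
      refine ⟨-q c₀, by linarith [hne c₀ hc0], fun c => ?_⟩
      by_cases hc : c = 0
      · subst hc
        have := hhom 0 0
        simp at this
        simp [this]
      have hpos : 0 < ‖c‖ := norm_pos_iff.2 hc
      have h1 : (((‖c‖⁻¹ : ℝ) : ℂ) • c) ∈ Metric.sphere (0 : EuclideanSpace ℂ (Fin d)) 1 := by
        rw [mem_sphere_zero_iff_norm, norm_smul, Complex.norm_real, norm_inv, norm_norm,
          inv_mul_cancel₀ hpos.ne']
      have h2 : q (((‖c‖⁻¹ : ℝ) : ℂ) • c) ≤ q c₀ := hmax h1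
      rw [hhom, inv_pow, inv_mul_le_iff₀ (by positivity)] at h2
      linarith
    · refine ⟨1, one_pos, fun c => ?_⟩
      have hc : c = 0 := by
        by_contra hc
        apply hS
        have hpos : 0 < ‖c‖ := norm_pos_iff.2 hc
        refine ⟨((‖c‖⁻¹ : ℝ) : ℂ) • c, ?_⟩
        rw [mem_sphere_zero_iff_norm, norm_smul, Complex.norm_real, norm_inv, norm_norm,
          inv_mul_cancel₀ hpos.ne']
      subst hc
      have := hhom 0 0
      simp at this
      simp [this]
  obtain ⟨ω, hω, hmain⟩ := key_fun M α P hre φ hφ (δ / 2) (by positivity)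
  refine ⟨fun i => (hω i).toLp (ω i), fun c hc => ?_⟩
  rw [hankelForm_eq (goodK_inv.add hk) _ (coe_sum_ae _ ω (fun i => (hω i).coeFn_toLp) c)]
  have hfm : MemLp (∑ i, c i • ω i) 2 halfLineMeasure :=
    memLp_finsetSum' _ fun i _ => (hω i).const_smul (c i)
  rw [sesq_add_kernel goodK_inv hk hfm hfm, Complex.add_re, (hmain c).1]
  have h1 := (hmain c).2
  have h2 := hδq (WithLp.toLp 2 c)
  rw [hq, EuclideanSpace.norm_sq_eq] at h2
  simp only at h2
  have h3 : 0 < ∑ i, ‖c i‖ ^ 2 := by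
    obtain ⟨i, hi⟩ := Function.ne_iff.1 hc
    have : 0 < ‖c i‖ := norm_pos_iff.2 hi
    exact Finset.sum_pos' (fun i _ => by positivity) ⟨i, Finset.mem_univ _, by positivity⟩
  nlinarith

lemma hankelForm_zero (k : ℝ → ℂ) (hk : GoodK k) : hankelForm k 0 = 0 := by
  rw [hankelForm_eq hk 0 (Lp.coeFn_zero _ _ _)]
  simp [sesq]

theorem carleman_plus_finite_rank_negative_spectrum (M₀ M₁ : ℕ) (hM : 1 ≤ M₀ + 2 * M₁)
    (α : ℕ → ℂ) (P : ℕ → Polynomial ℂ) (K : ℕ → ℕ)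
    (hdist : ∀ m ∈ Finset.Icc 1 (M₀ + 2 * M₁), ∀ n ∈ Finset.Icc 1 (M₀ + 2 * M₁),
      m ≠ n → α m ≠ α n)
    (hre : ∀ m ∈ Finset.Icc 1 (M₀ + 2 * M₁), 0 < (α m).re)
    (hαreal : ∀ m ∈ Finset.Icc 1 M₀, (α m).im = 0)
    (hαim : ∀ m ∈ Finset.Icc (M₀ + 1) (M₀ + M₁), 0 < (α m).im)
    (hαconj : ∀ m ∈ Finset.Icc (M₀ + 1) (M₀ + M₁), α (M₁ + m) = starRingEnd ℂ (α m))
    (hdeg : ∀ m ∈ Finset.Icc 1 (M₀ + 2 * M₁), (P m).degree = (K m : WithBot ℕ))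
    (hPreal : ∀ m ∈ Finset.Icc 1 M₀, ∀ k : ℕ,
      starRingEnd ℂ ((P m).coeff k) = (P m).coeff k)
    (hPconj : ∀ m ∈ Finset.Icc (M₀ + 1) (M₀ + M₁), ∀ k : ℕ,
      (P (M₁ + m)).coeff k = starRingEnd ℂ ((P m).coeff k)) :
    Nneg (hankelForm (fun u : ℝ => ((u : ℂ))⁻¹ + frKernel (M₀ + 2 * M₁) α P u)) =
      Nneg (hankelForm (frKernel (M₀ + 2 * M₁) α P)) ∧
    ((∀ f : Lp ℂ 2 halfLineMeasure,
        0 ≤ hankelForm (fun u : ℝ => ((u : ℂ))⁻¹ + frKernel (M₀ + 2 * M₁) α P u) f) ↔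
      (∀ f : Lp ℂ 2 halfLineMeasure, 0 ≤ hankelForm (frKernel (M₀ + 2 * M₁) α P) f)) := by
  have hk := goodK_fr _ α P hre
  constructor
  · unfold Nneg
    congr 1
    ext d
    constructor
    · rintro ⟨V, h1, h2, h3⟩
      exact ⟨V, h1, h2, fun f hf hf0 => (form_ge _ α P hre f).trans_lt (h3 f hf hf0)⟩
    · rintro ⟨V, h1, h2, h3⟩
      let B := Module.finBasisOfFinrankEq ℂ V h2
      obtain ⟨w, hw⟩ := key_Lp _ α P hre (fun i => (B i : Lp ℂ 2 halfLineMeasure)) (by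
        intro c hc
        have e : (∑ i, c i • (B i : Lp ℂ 2 halfLineMeasure)) =
            ((∑ i, c i • B i : V) : Lp ℂ 2 halfLineMeasure) := by
          simp
        rw [e]
        refine h3 _ (Submodule.coe_mem _) ?_
        intro h0
        apply hc
        have h0' : (∑ i, c i • B i : V) = 0 := by exact_mod_cast h0
        funext i
        exact Fintype.linearIndependent_iff.1 B.linearIndependent c h0' i)
      have hli : LinearIndependent ℂ w := by
        rw [Fintype.linearIndependent_iff]
        intro c hc
        by_contra hcon
        have hc0 : c ≠ 0 := by
          rintro rfl
          exact hcon (fun i => rfl)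
        have := hw c hc0
        rw [hc, hankelForm_zero _ (goodK_inv.add hk)] at this
        exact lt_irrefl _ this
      refine ⟨Submodule.span ℂ (Set.range w), FiniteDimensional.span_of_finite ℂ (Set.finite_range w), ?_, ?_⟩
      · rw [finrank_span_eq_card hli, Fintype.card_fin]
      · intro f hf hf0
        obtain ⟨c, rfl⟩ := (Submodule.mem_span_range_iff_exists_fun ℂ).1 hf
        apply hw
        rintro rfl
        simp at hf0
  · constructor
    · intro h f
      by_contra hcon
      push Not at hcon
      obtain ⟨w, hw⟩ := key_Lp _ α P hre (d := 1) (fun _ => f) (by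
        intro c hc
        have hc0 : c 0 ≠ 0 := by
          intro h0
          apply hc
          funext i
          rw [Subsingleton.elim i 0, h0]
          rfl
        have e := coe_sum_ae (d := 1) (fun _ => f) (fun _ => f)
          (fun _ => Filter.EventuallyEq.refl _ _) c
        rw [hankelForm_eq hk _ e, sesq_sum hk _ (fun _ => Lp.memLp f)]
        rw [hankelForm_eq hk f (Filter.EventuallyEq.refl _ _)] at hcon
        simp only [Fin.sum_univ_one]
        rw [Complex.mul_conj, Complex.re_ofReal_mul]
        exact mul_neg_of_pos_of_neg (Complex.normSq_pos.2 hc0) hcon)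
      have := hw (fun _ => 1) (by
        intro h0
        exact one_ne_zero (congrFun h0 0))
      exact absurd (h _) (not_le.2 this)
    · intro h f
      exact (h f).trans (form_ge _ α P hre f)

end
end

section
/- N_+(S) and N_-(S), the numbers of strictly positive and strictly negative eigenvalues of S counted with multiplicity, are given by: if K is odd, N_+(S) = N_-(S) = (K+1)/2; if K is even and p_K > 0, N_+(S) = K/2 + 1 and N_-(S) = K/2; if K is even and p_K < 0, N_+(S) = K/2 and N_-(S) = K/2 + 1. -/
open Matrix Polynomial

/-- The integer coefficients `ν ℓ k` defined by
`∏_{j=1}^{k} (j − z) = Σ_{ℓ=0}^{k} ν ℓ k · z^ℓ` (empty product `1`, `ν 0 0 = 1`),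
realized here over `ℝ`. -/
noncomputable def nuCoeffR (ℓ k : ℕ) : ℝ :=
  (∏ j ∈ Finset.Icc 1 k, (Polynomial.C (j : ℝ) - Polynomial.X)).coeff ℓ

/-- The coefficients `q_k = Σ_{ℓ=k}^{K} ν_{k,ℓ} α^{−1−ℓ} p_ℓ` of the sign-function of the
kernel `P(t)e^{−αt}`, `P(z) = Σ_{k=0}^{K} p_k z^k`, `α > 0`. -/
noncomputable def qCoeff (K : ℕ) (α : ℝ) (p : ℕ → ℝ) (k : ℕ) : ℝ :=
  ∑ ℓ ∈ Finset.Icc k K, nuCoeffR k ℓ * α ^ (-1 - (ℓ : ℤ)) * p ℓ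

/-- The sign-matrix `S` of the kernel `P(t)e^{−αt}`: the real symmetric matrix of order
`K+1` with `S j ℓ = (−1)^{j+ℓ} C(j+ℓ, j) q_{j+ℓ}` for `j + ℓ ≤ K` and `S j ℓ = 0`
for `j + ℓ > K`. -/
noncomputable def signMatrix (K : ℕ) (α : ℝ) (p : ℕ → ℝ) :
    Matrix (Fin (K + 1)) (Fin (K + 1)) ℝ := fun j ℓ =>
  if (j : ℕ) + (ℓ : ℕ) ≤ K then
    (-1) ^ ((j : ℕ) + (ℓ : ℕ)) * (Nat.choose ((j : ℕ) + (ℓ : ℕ)) (j : ℕ)) *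
      qCoeff K α p ((j : ℕ) + (ℓ : ℕ))
  else 0


lemma aux_count {n : ℕ} (A U : Matrix (Fin n) (Fin n) ℝ) (d : Fin n → ℝ)
    (hU : U * Uᵀ = 1) (hA : A = U * diagonal d * Uᵀ) (T : Finset (Fin n))
    (hT : ∀ x : Fin n → ℝ, (∀ j, j ∉ T → x j = 0) → x ⬝ᵥ (A *ᵥ x) ≤ 0) :
    T.card + (Finset.univ.filter fun i => 0 < d i).card ≤ n := by
  by_contra hlt
  push Not at hlt
  let f : (Fin n → ℝ) →ₗ[ℝ] ({i : Fin n // ¬ 0 < d i} → ℝ) × ({j : Fin n // j ∉ T} → ℝ) :=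
    ((LinearMap.funLeft ℝ ℝ Subtype.val).comp (Matrix.mulVecLin Uᵀ)).prod
      (LinearMap.funLeft ℝ ℝ Subtype.val)
  have hf : f.ker ≠ ⊥ := by
    apply LinearMap.ker_ne_bot_of_finrank_lt
    rw [Module.finrank_prod, Module.finrank_fintype_fun_eq_card, Module.finrank_fintype_fun_eq_card,
      Module.finrank_fintype_fun_eq_card, Fintype.card_subtype_compl, Fintype.card_subtype_compl,
      Fintype.card_subtype, Fintype.card_coe, Fintype.card_fin]
    have h1 : T.card ≤ n := by simpa using T.card_le_univ
    have h2 : (Finset.univ.filter fun i => 0 < d i).card ≤ n := by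
      simpa using (Finset.univ.filter fun i => 0 < d i).card_le_univ
    omega
  obtain ⟨x, hx, hx0⟩ := (Submodule.ne_bot_iff _).1 hf
  have hx' : f x = 0 := hx
  have h1 : ∀ i, ¬ 0 < d i → (Uᵀ *ᵥ x) i = 0 := fun i hi =>
    congrFun (congrArg Prod.fst hx') ⟨i, hi⟩
  have h2 : ∀ j, j ∉ T → x j = 0 := fun j hj =>
    congrFun (congrArg Prod.snd hx') ⟨j, hj⟩
  have h3 := hT x h2
  have h4 : x ⬝ᵥ (A *ᵥ x) = ∑ i, d i * (Uᵀ *ᵥ x) i ^ 2 := by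
    rw [hA, ← Matrix.mulVec_mulVec, ← Matrix.mulVec_mulVec, Matrix.dotProduct_mulVec,
      ← Matrix.mulVec_transpose]
    simp only [dotProduct, Matrix.mulVec_diagonal]
    exact Finset.sum_congr rfl fun i _ => by ring
  have h5 : ∀ i ∈ Finset.univ, 0 ≤ d i * (Uᵀ *ᵥ x) i ^ 2 := by
    intro i _
    by_cases hi : 0 < d i
    · positivity
    · rw [h1 i hi]; simp
  have h6 := (Finset.sum_eq_zero_iff_of_nonneg h5).1
    (le_antisymm (h4 ▸ h3) (Finset.sum_nonneg h5))
  have h7 : Uᵀ *ᵥ x = 0 := by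
    funext i
    by_cases hi : 0 < d i
    · have := h6 i (Finset.mem_univ _)
      simpa [hi.ne'] using this
    · exact h1 i hi
  apply hx0
  have : (U * Uᵀ) *ᵥ x = 0 := by rw [← Matrix.mulVec_mulVec, h7, Matrix.mulVec_zero]
  simpa [hU] using this

lemma nu_diag (k : ℕ) : nuCoeffR k k = (-1) ^ k := by
  unfold nuCoeffR
  have h := Polynomial.coeff_prod_of_natDegree_le (s := Finset.Icc 1 k)
    (fun j : ℕ => (Polynomial.C (j : ℝ) - Polynomial.X)) 1 (by
      intro j _
      exact (Polynomial.natDegree_sub_le _ _).trans (by simp))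
  simp at h
  simpa using h

lemma q_top (K : ℕ) (α : ℝ) (p : ℕ → ℝ) :
    qCoeff K α p K = (-1) ^ K * α ^ (-1 - (K : ℤ)) * p K := by
  simp [qCoeff, nu_diag]

lemma skew_entry (K : ℕ) (α : ℝ) (p : ℕ → ℝ) (i j : Fin (K + 1)) (h : (i : ℕ) + j = K) :
    signMatrix K α p i j = (Nat.choose K i : ℝ) * (α ^ (-1 - (K : ℤ)) * p K) := by
  unfold signMatrix
  rw [if_pos h.le, h, q_top]
  have : ((-1 : ℝ) ^ K) * (-1) ^ K = 1 := by rw [← mul_pow]; simp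
  linear_combination (Nat.choose K i : ℝ) * (α ^ (-1 - (K : ℤ)) * p K) * this

lemma zero_entry (K : ℕ) (α : ℝ) (p : ℕ → ℝ) (i j : Fin (K + 1)) (h : K < (i : ℕ) + j) :
    signMatrix K α p i j = 0 := by
  unfold signMatrix
  rw [if_neg (by omega)]

lemma det_ne (K : ℕ) (α : ℝ) (hα : 0 < α) (p : ℕ → ℝ) (hpK : p K ≠ 0) :
    (signMatrix K α p).det ≠ 0 := by
  have h1 : ((signMatrix K α p).submatrix Fin.revPerm id).det ≠ 0 := by
    rw [Matrix.det_of_isLowerTriangular]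
    · rw [Finset.prod_ne_zero_iff]
      intro i _
      have hi := i.2
      have e : ((Fin.revPerm i : Fin (K + 1)) : ℕ) + i = K := by
        simp [Fin.val_rev]; omega
      rw [Matrix.submatrix_apply, id, skew_entry K α p _ _ e]
      have : 0 < Nat.choose K (Fin.revPerm i : Fin (K + 1)) := Nat.choose_pos (by omega)
      have h2 : (Nat.choose K (Fin.revPerm i : Fin (K + 1)) : ℝ) ≠ 0 := by
        exact_mod_cast this.ne'
      have h3 : α ^ (-1 - (K : ℤ)) ≠ 0 := (zpow_pos hα _).ne'
      exact mul_ne_zero h2 (mul_ne_zero h3 hpK)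
    · intro i j hij
      have hij' : (i : ℕ) < j := hij
      have hi := i.2
      apply zero_entry
      simp [Fin.val_rev]; omega
  rw [Matrix.det_permute] at h1
  exact right_ne_zero_of_mul h1

lemma quad_zero (K : ℕ) (α : ℝ) (p : ℕ → ℝ) (x : Fin (K + 1) → ℝ)
    (hx : ∀ j, j ∉ (Finset.univ.filter fun j : Fin (K + 1) => K < 2 * (j : ℕ)) → x j = 0) :
    x ⬝ᵥ (signMatrix K α p *ᵥ x) = 0 := by
  simp only [dotProduct, mulVec, Finset.mul_sum]
  refine Finset.sum_eq_zero fun i _ => Finset.sum_eq_zero fun j _ => ?_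
  by_cases hi : K < 2 * (i : ℕ)
  · by_cases hj : K < 2 * (j : ℕ)
    · rw [zero_entry _ _ _ _ _ (by omega)]; simp
    · rw [hx j (by simpa using hj)]; simp
  · rw [hx i (by simpa using hi)]; simp

lemma quad_mid (K : ℕ) (α : ℝ) (hα : 0 < α) (p : ℕ → ℝ) (x : Fin (K + 1) → ℝ)
    (hx : ∀ j, j ∉ (Finset.univ.filter fun j : Fin (K + 1) => K ≤ 2 * (j : ℕ)) → x j = 0) :
    0 ≤ p K * (x ⬝ᵥ (signMatrix K α p *ᵥ x)) := by
  simp only [dotProduct, mulVec, Finset.mul_sum]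
  refine Finset.sum_nonneg fun i _ => Finset.sum_nonneg fun j _ => ?_
  by_cases hi : K ≤ 2 * (i : ℕ)
  · by_cases hj : K ≤ 2 * (j : ℕ)
    · by_cases hij : K < (i : ℕ) + j
      · rw [zero_entry _ _ _ _ _ hij]; simp
      · have : i = j := Fin.ext (by omega)
        subst this
        rw [skew_entry _ _ _ _ _ (by omega)]
        have h3 : 0 < α ^ (-1 - (K : ℤ)) := zpow_pos hα _
        have : p K * (x i * ((Nat.choose K i : ℝ) * (α ^ (-1 - (K : ℤ)) * p K) * x i))
          = (p K) ^ 2 * (x i) ^ 2 * (Nat.choose K i : ℝ) * α ^ (-1 - (K : ℤ)) := by ring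
        rw [this]
        positivity
    · rw [hx j (by simpa using hj)]; simp
  · rw [hx i (by simpa using hi)]; simp

lemma card_ge (n m : ℕ) : (Finset.univ.filter fun j : Fin n => m ≤ (j : ℕ)).card = n - m := by
  have h := Finset.card_filter_add_card_filter_not (s := (Finset.univ : Finset (Fin n)))
    (fun j => (j : ℕ) < m)
  simp only [not_lt, Fin.card_filter_val_lt, Finset.card_univ, Fintype.card_fin] at h
  omega

/-- **Inertia of the sign-matrix** of the kernel `P(t)e^{−αt}` (`α > 0`, `P` real with
leading coefficient `p_K ≠ 0`): if `K` is odd, it has `(K+1)/2` positive and `(K+1)/2`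
negative eigenvalues; if `K` is even and `p_K > 0` (resp. `p_K < 0`), it has `K/2+1`
positive and `K/2` negative (resp. `K/2` positive and `K/2+1` negative) eigenvalues,
counted with multiplicity. -/
theorem sign_matrix_inertia (K : ℕ) (α : ℝ) (hα : 0 < α) (p : ℕ → ℝ) (hpK : p K ≠ 0)
    (hS : (signMatrix K α p).IsHermitian) :
    (Odd K →
      (Finset.univ.filter fun i => 0 < hS.eigenvalues i).card = (K + 1) / 2 ∧
      (Finset.univ.filter fun i => hS.eigenvalues i < 0).card = (K + 1) / 2) ∧
    (Even K → 0 < p K →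
      (Finset.univ.filter fun i => 0 < hS.eigenvalues i).card = K / 2 + 1 ∧
      (Finset.univ.filter fun i => hS.eigenvalues i < 0).card = K / 2) ∧
    (Even K → p K < 0 →
      (Finset.univ.filter fun i => 0 < hS.eigenvalues i).card = K / 2 ∧
      (Finset.univ.filter fun i => hS.eigenvalues i < 0).card = K / 2 + 1) := by
  set S := signMatrix K α p with hSdef
  obtain ⟨U, hU, hA⟩ : ∃ U : Matrix (Fin (K + 1)) (Fin (K + 1)) ℝ, U * Uᵀ = 1 ∧
      S = U * diagonal hS.eigenvalues * Uᵀ := by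
    refine ⟨(hS.eigenvectorUnitary : Matrix _ _ ℝ), ?_, ?_⟩
    · have := Unitary.coe_mul_star_self hS.eigenvectorUnitary
      simpa [star_eq_conjTranspose] using this
    · have := hS.spectral_theorem
      simpa [star_eq_conjTranspose, Unitary.conjStarAlgAut_apply] using this
  have hnA : -S = U * diagonal (fun i => - hS.eigenvalues i) * Uᵀ := by
    conv_lhs => rw [hA]
    have e : diagonal (fun i => - hS.eigenvalues i) = -diagonal hS.eigenvalues := by
      rw [Matrix.diagonal_neg]
    rw [e, Matrix.mul_neg, Matrix.neg_mul]
  have hne : ∀ i, hS.eigenvalues i ≠ 0 := by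
    have h := det_ne K α hα p hpK
    rw [← hSdef, hS.det_eq_prod_eigenvalues, Finset.prod_ne_zero_iff] at h
    intro i
    simpa using h i (Finset.mem_univ i)
  have hsum : (Finset.univ.filter fun i => 0 < hS.eigenvalues i).card +
      (Finset.univ.filter fun i => hS.eigenvalues i < 0).card = K + 1 := by
    have h := Finset.card_filter_add_card_filter_not (s := (Finset.univ : Finset (Fin (K + 1))))
      (fun i => 0 < hS.eigenvalues i)
    rw [Finset.card_univ, Fintype.card_fin] at h
    refine Eq.trans ?_ h
    congr 2
    ext i
    simp only [Finset.mem_filter, Finset.mem_univ, true_and, not_lt]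
    exact ⟨le_of_lt, fun h => lt_of_le_of_ne h (hne i)⟩
  have hpos := fun T hT => aux_count S U hS.eigenvalues hU hA T hT
  have hneg := fun T hT => aux_count (-S) U (fun i => - hS.eigenvalues i) hU hnA T hT
  simp only [Left.neg_pos_iff, Matrix.neg_mulVec, dotProduct_neg, Left.neg_nonpos_iff] at hneg
  have c0 : (Finset.univ.filter fun j : Fin (K + 1) => K < 2 * (j : ℕ)).card
      = K + 1 - (K / 2 + 1) := by
    rw [← card_ge]; congr 1; ext j; simp; omega
  have c1 : (Finset.univ.filter fun j : Fin (K + 1) => K ≤ 2 * (j : ℕ)).card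
      = K + 1 - ((K + 1) / 2) := by
    rw [← card_ge]; congr 1; ext j; simp; omega
  have a1 := hpos _ fun x hx => (quad_zero K α p x hx).le
  have a2 := hneg _ fun x hx => (quad_zero K α p x hx).ge
  rw [c0] at a1 a2
  refine ⟨fun ho => ?_, fun he hp => ?_, fun he hp => ?_⟩
  · obtain ⟨m, rfl⟩ := ho
    omega
  · have a3 := hneg _ fun x hx => nonneg_of_mul_nonneg_right (quad_mid K α hα p x hx) hp
    rw [c1] at a3
    obtain ⟨m, rfl⟩ := he
    omega
  · have a3 := hpos _ fun x hx => by
      have := quad_mid K α hα p x hx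
      exact le_of_not_gt fun h => absurd this (not_le.2 (mul_neg_of_neg_of_pos hp h))
    rw [c1] at a3
    obtain ⟨m, rfl⟩ := he
    omega
end
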